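/- Let D′ ⋐ D ⊂ ℝ^{2n+1} be bounded open sets, let s ≥ 2n + 4 be an integer, let m₁, m₂ ≥ 1, let F : cl(D) × ℝ^{m₁} → ℝ^{m₂} be a smooth map, let f : cl(D) → ℝ^{m₁} be a smooth function, and let c > 0. Then there exists a polynomial Q in two variables, with nonnegative coefficients and of degree at most s in each variable, such that for every smooth function g : cl(D) → ℝ^{m₁} with sup_{x ∈ D} |g(x) − f(x)| ≤ c, one has ‖F(·, f(·)) − F(·, g(·))‖_{D′,s} ≤ ‖f − g‖_{D,s} · Q(‖f‖_{D,s}, ‖g‖_{D,s}). -/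

import Mathlib

open MeasureTheory Bornology

noncomputable section

variable {E : Type*} [NormedAddCommGroup E] [NormedSpace ℝ E]

/-- The standard contact form `η₀ = dx^{2n+1} - Σ x^{n+j} dx^j` on `ℝ^{2n+1}`
(0-indexed coordinates): `η₀(x)(v) = v_{2n} - Σ_{j<n} x_{n+j} v_j`. -/
def eta0 (n : ℕ) (x v : Fin (2*n+1) → ℝ) : ℝ :=
  v ⟨2*n, by omega⟩ -
    ∑ j : Fin n, x ⟨n + j, by have := j.2; omega⟩ * v ⟨j, by have := j.2; omega⟩

/-- `dη₀ = Σ_{j<n} dx^j ∧ dx^{n+j}`. -/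
def dEta0 (n : ℕ) (u v : Fin (2*n+1) → ℝ) : ℝ :=
  ∑ j : Fin n,
    (u ⟨j, by have := j.2; omega⟩ * v ⟨n + j, by have := j.2; omega⟩ -
     u ⟨n + j, by have := j.2; omega⟩ * v ⟨j, by have := j.2; omega⟩)

/-- The horizontal vector fields: for `j < n`, `X_j = ∂_j + x_{n+j} ∂_{2n}`;
for `n ≤ j < 2n`, `X_j = ∂_j` (0-indexed). -/
def Xvec (n : ℕ) (j : Fin (2*n)) (x : Fin (2*n+1) → ℝ) : Fin (2*n+1) → ℝ :=
  if h : (j : ℕ) < n then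
    (Pi.single (⟨j, by omega⟩ : Fin (2*n+1)) 1 : Fin (2*n+1) → ℝ)
      + x ⟨n + j, by omega⟩ • (Pi.single (⟨2*n, by omega⟩ : Fin (2*n+1)) 1 : Fin (2*n+1) → ℝ)
  else
    (Pi.single (⟨j, by have := j.2; omega⟩ : Fin (2*n+1)) 1 : Fin (2*n+1) → ℝ)

/-- The horizontal derivative `X_j f`. -/
def hDeriv (n : ℕ) (j : Fin (2*n)) (f : (Fin (2*n+1) → ℝ) → E)
    (x : Fin (2*n+1) → ℝ) : E :=
  fderiv ℝ f x (Xvec n j x)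

/-- Iterated horizontal derivative `X_I f = X_{i₁} ⋯ X_{i_t} f`. -/
def XI (n : ℕ) : List (Fin (2*n)) → ((Fin (2*n+1) → ℝ) → E) → ((Fin (2*n+1) → ℝ) → E)
  | [], f => f
  | j :: I, f => hDeriv n j (XI n I f)

/-- Squared Folland–Stein norm `‖f‖_{D,s}² = Σ_{|I| ≤ s} ∫_D ‖X_I f‖²`. -/
def fsNormSq (n : ℕ) (D : Set (Fin (2*n+1) → ℝ)) (s : ℕ)
    (f : (Fin (2*n+1) → ℝ) → E) : ℝ :=
  ∑ t ∈ Finset.range (s+1), ∑ I : Fin t → Fin (2*n),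
    ∫ x in D, ‖XI n (List.ofFn I) f x‖^2

/-- The Folland–Stein norm `‖f‖_{D,s}`. -/
def fsNorm (n : ℕ) (D : Set (Fin (2*n+1) → ℝ)) (s : ℕ)
    (f : (Fin (2*n+1) → ℝ) → E) : ℝ :=
  Real.sqrt (fsNormSq n D s f)

/-- Ordinary partial derivative `∂_i f`. -/
def pDeriv (n : ℕ) (i : Fin (2*n+1)) (f : (Fin (2*n+1) → ℝ) → E)
    (x : Fin (2*n+1) → ℝ) : E :=
  fderiv ℝ f x (Pi.single i 1 : Fin (2*n+1) → ℝ)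

/-- Iterated ordinary partial derivative. -/
def pI (n : ℕ) : List (Fin (2*n+1)) → ((Fin (2*n+1) → ℝ) → E) → ((Fin (2*n+1) → ℝ) → E)
  | [], f => f
  | i :: I, f => pDeriv n i (pI n I f)

/-- The Reeb derivative `T₀ f = ∂_{2n} f` (0-indexed). -/
def T0Deriv (n : ℕ) (f : (Fin (2*n+1) → ℝ) → E) (x : Fin (2*n+1) → ℝ) : E :=
  fderiv ℝ f x (Pi.single (⟨2*n, by omega⟩ : Fin (2*n+1)) 1 : Fin (2*n+1) → ℝ)

/-- `X` is a contact vector field on `D`:  `dη₀(X, X_j) + X_j(η₀(X)) = 0` for all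
horizontal `X_j`. -/
def IsContactVF (n : ℕ) (D : Set (Fin (2*n+1) → ℝ))
    (X : (Fin (2*n+1) → ℝ) → (Fin (2*n+1) → ℝ)) : Prop :=
  ∀ j : Fin (2*n), ∀ x ∈ D,
    dEta0 n (X x) (Xvec n j x) + hDeriv n j (fun y => eta0 n y (X y)) x = 0

/-- The contact vector field with generating function `g`:
`X_g = g T₀ + Σ_j (-(X_{n+j} g) X_j + (X_j g) X_{n+j})`. -/
def genVF (n : ℕ) (g : (Fin (2*n+1) → ℝ) → ℝ) (x : Fin (2*n+1) → ℝ) :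
    Fin (2*n+1) → ℝ :=
  g x • (Pi.single (⟨2*n, by omega⟩ : Fin (2*n+1)) 1 : Fin (2*n+1) → ℝ)
  + ∑ j : Fin n,
      (-(hDeriv n (⟨n + j, by have := j.2; omega⟩ : Fin (2*n)) g x) •
          Xvec n (⟨j, by have := j.2; omega⟩ : Fin (2*n)) x
        + (hDeriv n (⟨j, by have := j.2; omega⟩ : Fin (2*n)) g x) •
          Xvec n (⟨n + j, by have := j.2; omega⟩ : Fin (2*n)) x)

/-!
Let `χ` be a cutoff supported in `D` and equal to `1` near the closure of `D'`. The smallness of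
`g - f` gives sup bounds for `u = χ f` and `v = χ g`; an `L¹` Sobolev inequality with `2n + 2`
horizontal derivatives (the Reeb direction is a commutator and costs two of them) gives one for
`u - v`. Integration by parts along the horizontal fields and discrete convexity interpolate
between these and the `L²` bounds of order `s`: the derivatives of order `k` of `u` and `v` are
`O(β ^ k)` in `L^{2s/k}`, where `β ^ s = 1 + ‖f‖ + ‖g‖`, and those of `u - v` gain the factor
`‖f - g‖`.

By the chain rule `X_I (χ F(·, u))` is a polynomial in the horizontal derivatives of `u` of total
weight `|I|`, with coefficients that are smooth functions of `(x, u)`. The exponents `2s/k` are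
those for which Hölder's inequality adds weights, so replacing `u` by `v` one factor at a time
bounds the difference by a multiple of `‖f - g‖ β ^ s = ‖f - g‖ (1 + ‖f‖ + ‖g‖)`.
-/

open scoped NNReal ENNReal ContDiff Topology

section HorizontalCalculus

variable {n : ℕ} {G : Type*} [NormedAddCommGroup G] [NormedSpace ℝ G]

/-- The space `ℝ^{2n+1}` underlying the Heisenberg group, with the sup norm. -/
abbrev ContactSpace (n : ℕ) : Type := Fin (2 * n + 1) → ℝ

/-- The coefficient of `∂_{2n}` in the horizontal field `X_k`: the coordinate `x_{n+k}` if `k < n`,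
and `0` otherwise. -/
def reebCoeff (n : ℕ) (k : Fin (2 * n)) : ContactSpace n →L[ℝ] ℝ :=
  if h : (k : ℕ) < n then ContinuousLinearMap.proj ⟨n + k, by omega⟩ else 0

lemma Xvec_eq_single_add (k : Fin (2 * n)) (x : ContactSpace n) :
    Xvec n k x = Pi.single k.castSucc 1 + reebCoeff n k x • Pi.single (Fin.last (2 * n)) 1 := by
  unfold Xvec reebCoeff
  split_ifs with h
  · rfl
  · simp only [zero_apply, zero_smul, add_zero]; rfl

lemma reebCoeff_single_last (k : Fin (2 * n)) :
    reebCoeff n k (Pi.single (Fin.last (2 * n)) 1) = 0 := by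
  unfold reebCoeff
  split_ifs with h
  · refine Pi.single_eq_of_ne (fun h' => ?_) 1
    have := congrArg Fin.val h'
    simp only [Fin.val_last] at this
    omega
  · rfl

lemma reebCoeff_Xvec (j k : Fin (2 * n)) (x : ContactSpace n) :
    reebCoeff n k (Xvec n j x) = reebCoeff n k (Pi.single j.castSucc 1) := by
  rw [Xvec_eq_single_add, map_add, map_smul, reebCoeff_single_last, smul_zero, add_zero]

lemma hasFDerivAt_Xvec (k : Fin (2 * n)) (x : ContactSpace n) :
    HasFDerivAt (Xvec n k)
      ((reebCoeff n k).smulRight (Pi.single (Fin.last (2 * n)) 1 : ContactSpace n)) x := by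
  rw [funext (Xvec_eq_single_add k)]
  exact (((reebCoeff n k).hasFDerivAt).smul_const _).const_add _

lemma contDiff_Xvec (k : Fin (2 * n)) : ContDiff ℝ ∞ (Xvec n k) := by
  rw [funext (Xvec_eq_single_add k)]
  exact contDiff_const.add ((reebCoeff n k).contDiff.smul contDiff_const)

lemma XI_append (I J : List (Fin (2 * n))) (f : ContactSpace n → E) :
    XI n (I ++ J) f = XI n I (XI n J f) := by
  induction I with
  | nil => rfl
  | cons j I ih => simp only [List.cons_append, XI, ih]

lemma contDiffOn_XI {f : ContactSpace n → E} {U : Set (ContactSpace n)} (hU : IsOpen U)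
    (hf : ContDiffOn ℝ ∞ f U) (I : List (Fin (2 * n))) : ContDiffOn ℝ ∞ (XI n I f) U := by
  induction I with
  | nil => exact hf
  | cons j I ih =>
    exact (ih.fderiv_of_isOpen (m := ∞) hU (by simp)).clm_apply (contDiff_Xvec j).contDiffOn

lemma contDiff_XI {f : ContactSpace n → E} (hf : ContDiff ℝ ∞ f) (I : List (Fin (2 * n))) :
    ContDiff ℝ ∞ (XI n I f) :=
  contDiffOn_univ.1 (contDiffOn_XI isOpen_univ hf.contDiffOn I)

lemma differentiableAt_XI {f : ContactSpace n → E} {U : Set (ContactSpace n)} (hU : IsOpen U)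
    (hf : ContDiffOn ℝ ∞ f U) (I : List (Fin (2 * n))) {x : ContactSpace n} (hx : x ∈ U) :
    DifferentiableAt ℝ (XI n I f) x :=
  ((contDiffOn_XI hU hf I).differentiableOn (by simp)).differentiableAt (hU.mem_nhds hx)

lemma XI_eventuallyEq {f g : ContactSpace n → E} {x : ContactSpace n} (h : f =ᶠ[𝓝 x] g)
    (I : List (Fin (2 * n))) : XI n I f =ᶠ[𝓝 x] XI n I g := by
  induction I with
  | nil => exact h
  | cons j I ih => filter_upwards [ih.fderiv (𝕜 := ℝ)] with y hy using congrArg (· (Xvec n j y)) hy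

lemma XI_continuousLinearMap_comp {f : ContactSpace n → E} {U : Set (ContactSpace n)}
    (hU : IsOpen U) (hf : ContDiffOn ℝ ∞ f U) (L : E →L[ℝ] G) (I : List (Fin (2 * n))) :
    Set.EqOn (XI n I fun y => L (f y)) (fun y => L (XI n I f y)) U := by
  induction I with
  | nil => exact fun _ _ => rfl
  | cons j I ih =>
    intro x hx
    have hL : HasFDerivAt (fun y => L (XI n I f y)) (L ∘L fderiv ℝ (XI n I f) x) x :=
      L.hasFDerivAt.comp x (differentiableAt_XI hU hf I hx).hasFDerivAt
    simp only [XI, hDeriv, (ih.eventuallyEq_of_mem (hU.mem_nhds hx)).fderiv_eq, hL.fderiv,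
      ContinuousLinearMap.comp_apply]

lemma XI_add {f g : ContactSpace n → E} {U : Set (ContactSpace n)} (hU : IsOpen U)
    (hf : ContDiffOn ℝ ∞ f U) (hg : ContDiffOn ℝ ∞ g U) (I : List (Fin (2 * n))) :
    Set.EqOn (XI n I fun y => f y + g y) (fun y => XI n I f y + XI n I g y) U := by
  induction I with
  | nil => exact fun _ _ => rfl
  | cons j I ih =>
    intro x hx
    simp only [XI, hDeriv, (ih.eventuallyEq_of_mem (hU.mem_nhds hx)).fderiv_eq,
      fderiv_fun_add (differentiableAt_XI hU hf I hx) (differentiableAt_XI hU hg I hx),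
      add_apply]

lemma XI_sub {f g : ContactSpace n → E} {U : Set (ContactSpace n)} (hU : IsOpen U)
    (hf : ContDiffOn ℝ ∞ f U) (hg : ContDiffOn ℝ ∞ g U) (I : List (Fin (2 * n))) :
    Set.EqOn (XI n I fun y => f y - g y) (fun y => XI n I f y - XI n I g y) U := by
  intro x hx
  have hneg := XI_continuousLinearMap_comp hU hg (-ContinuousLinearMap.id ℝ E) I hx
  have hadd := XI_add hU hf hg.neg I hx
  simpa only [sub_eq_add_neg, hadd, neg_apply,
    ContinuousLinearMap.id_apply, add_right_inj] using hneg

lemma XI_pi_apply {ι : Type*} [Fintype ι] {f : ContactSpace n → ι → ℝ}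
    {U : Set (ContactSpace n)} (hU : IsOpen U) (hf : ContDiffOn ℝ ∞ f U)
    (I : List (Fin (2 * n))) (i : ι) :
    Set.EqOn (fun x => XI n I f x i) (XI n I fun y => f y i) U :=
  (XI_continuousLinearMap_comp hU hf (ContinuousLinearMap.proj (R := ℝ) i) I).symm

lemma tsupport_XI_subset (f : ContactSpace n → E) (I : List (Fin (2 * n))) :
    tsupport (XI n I f) ⊆ tsupport f := by
  induction I with
  | nil => exact subset_rfl
  | cons j I ih =>
    have hsupp : Function.support (XI n (j :: I) f) ⊆ Function.support (fderiv ℝ (XI n I f)) :=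
      fun x hx hx' => hx (by simp only [XI, hDeriv, hx', zero_apply])
    exact (closure_mono hsupp).trans ((tsupport_fderiv_subset ℝ).trans ih)

lemma hasCompactSupport_XI {f : ContactSpace n → E} (hf : HasCompactSupport f)
    (I : List (Fin (2 * n))) : HasCompactSupport (XI n I f) :=
  hf.of_isClosed_subset (isClosed_tsupport _) (tsupport_XI_subset f I)

lemma hDeriv_hDeriv {f : ContactSpace n → E} {x : ContactSpace n} (hf : ContDiffAt ℝ 2 f x)
    (j k : Fin (2 * n)) :
    hDeriv n j (hDeriv n k f) x = fderiv ℝ (fderiv ℝ f) x (Xvec n j x) (Xvec n k x) +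
      reebCoeff n k (Pi.single j.castSucc 1) • T0Deriv n f x := by
  have h2 : HasFDerivAt (fderiv ℝ f) (fderiv ℝ (fderiv ℝ f) x) x :=
    ((hf.fderiv_right (m := 1) le_rfl).differentiableAt one_ne_zero).hasFDerivAt
  have hder := (h2.clm_apply (hasFDerivAt_Xvec k x)).fderiv
  change fderiv ℝ (fun y => fderiv ℝ f y (Xvec n k y)) x _ = _
  simp only [hder, add_apply, ContinuousLinearMap.comp_apply, ContinuousLinearMap.flip_apply,
    ContinuousLinearMap.smulRight_apply, map_smul, reebCoeff_Xvec]
  rw [add_comm]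
  rfl

lemma T0Deriv_eq_commutator {f : ContactSpace n → E} {x : ContactSpace n}
    (hf : ContDiffAt ℝ 2 f x) (i : Fin n) :
    T0Deriv n f x = XI n [⟨n + i, by omega⟩, ⟨i, by omega⟩] f x -
      XI n [⟨i, by omega⟩, ⟨n + i, by omega⟩] f x := by
  have hsymm : IsSymmSndFDerivAt ℝ f x := hf.isSymmSndFDerivAt (by simp)
  have h1 : reebCoeff n ⟨i, by omega⟩ (Pi.single (Fin.castSucc ⟨n + i, by omega⟩) 1) = 1 := by
    simp [reebCoeff]
  have h0 : reebCoeff n ⟨n + i, by omega⟩ = 0 := by simp [reebCoeff]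
  simp only [XI, hDeriv_hDeriv hf, h1, h0, zero_apply, one_smul, zero_smul, add_zero,
    hsymm.eq (Xvec n ⟨n + i, _⟩ x), add_sub_cancel_left]

end HorizontalCalculus

section InterpolationExponents

/-- The exponent `2s/k` in which the interpolation inequality controls derivatives of order `k`;
division in `ℝ≥0∞` makes it `⊤` for `k = 0`. -/
def interpExp (s k : ℕ) : ℝ≥0∞ := 2 * s / k

lemma interpExp_zero {s : ℕ} (hs : s ≠ 0) : interpExp s 0 = ⊤ := by
  simpa [interpExp] using ENNReal.div_zero (a := 2 * (s : ℝ≥0∞)) (by simpa using hs)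

lemma interpExp_self {s : ℕ} (hs : s ≠ 0) : interpExp s s = 2 :=
  ENNReal.mul_div_cancel_right (by simpa using hs) (by simp)

lemma interpExp_antitone (s : ℕ) : Antitone (interpExp s) := fun k l h => by
  unfold interpExp
  gcongr

lemma two_le_interpExp {s k : ℕ} (hs : s ≠ 0) (hk : k ≤ s) : 2 ≤ interpExp s k :=
  (interpExp_self hs).symm.trans_le (interpExp_antitone s hk)

lemma one_le_interpExp {s k : ℕ} (hs : s ≠ 0) (hk : k ≤ s) : 1 ≤ interpExp s k :=
  one_le_two.trans (two_le_interpExp hs hk)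

lemma inv_interpExp {s : ℕ} (hs : s ≠ 0) (k : ℕ) : (interpExp s k)⁻¹ = k / (2 * s) :=
  ENNReal.inv_div (by simp) (by simp [hs])

lemma holderTriple_interpExp {s : ℕ} (hs : s ≠ 0) (k l : ℕ) :
    ENNReal.HolderTriple (interpExp s k) (interpExp s l) (interpExp s (k + l)) where
  inv_add_inv_eq_inv := by
    rw [inv_interpExp hs, inv_interpExp hs, inv_interpExp hs, ← ENNReal.add_div, Nat.cast_add]

lemma interpExp_eq_ofReal (s : ℕ) {k : ℕ} (hk : 0 < k) :
    interpExp s k = ENNReal.ofReal (2 * s / k) := by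
  rw [interpExp, ENNReal.ofReal_div_of_pos (by positivity), ENNReal.ofReal_mul zero_le_two,
    ENNReal.ofReal_natCast, ENNReal.ofReal_natCast, ENNReal.ofReal_ofNat]

variable {α : Type*} [MeasurableSpace α] {μ : Measure α}

lemma exists_eLpNorm_le_mul_eLpNorm {F : Type*} [NormedAddCommGroup F] (μ : Measure α)
    [IsFiniteMeasure μ] {p q : ℝ≥0∞} (hpq : p ≤ q) :
    ∃ C : ℝ≥0, ∀ u : α → F, AEStronglyMeasurable u μ → eLpNorm u p μ ≤ C * eLpNorm u q μ := by
  rcases eq_or_ne p 0 with rfl | hp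
  · exact ⟨0, fun u _ => by simp⟩
  have hexp : 0 ≤ 1 / p.toReal - 1 / q.toReal := by
    rcases eq_or_ne q ⊤ with rfl | hq
    · simp
    · have := ENNReal.toReal_pos hp (ne_top_of_le_ne_top hq hpq)
      have := ENNReal.toReal_mono hq hpq
      exact sub_nonneg.2 (by gcongr)
  lift μ Set.univ ^ (1 / p.toReal - 1 / q.toReal) to ℝ≥0
    using ENNReal.rpow_ne_top_of_nonneg hexp (measure_ne_top μ _) with C hC
  exact ⟨C, fun u hu => by simpa only [hC, mul_comm] using
    eLpNorm_le_eLpNorm_mul_rpow_measure_univ hpq hu⟩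

lemma exists_eLpNorm_interpExp_le_of_le (μ : Measure α) [IsFiniteMeasure μ] (s : ℕ) {k l : ℕ}
    (hkl : k ≤ l) :
    ∃ V : ℝ≥0, ∀ (u : α → ℝ) (C β : ℝ≥0∞), AEStronglyMeasurable u μ → 1 ≤ β →
      eLpNorm u (interpExp s k) μ ≤ C * β ^ k → eLpNorm u (interpExp s l) μ ≤ V * C * β ^ l := by
  obtain ⟨V, hV⟩ := exists_eLpNorm_le_mul_eLpNorm (F := ℝ) μ (interpExp_antitone s hkl)
  refine ⟨V, fun u C β hu hβ huC => ?_⟩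
  calc eLpNorm u (interpExp s l) μ ≤ V * (C * β ^ k) := (hV u hu).trans (by gcongr)
    _ ≤ V * C * β ^ l := by rw [mul_assoc]; gcongr

lemma eLpNorm_mul_interpExp_le {s : ℕ} (hs : s ≠ 0) {k l : ℕ} {u v : α → ℝ} {a b β : ℝ≥0∞}
    (hu : AEStronglyMeasurable u μ) (hv : AEStronglyMeasurable v μ)
    (hua : eLpNorm u (interpExp s k) μ ≤ a * β ^ k)
    (hvb : eLpNorm v (interpExp s l) μ ≤ b * β ^ l) :
    eLpNorm (fun x => u x * v x) (interpExp s (k + l)) μ ≤ a * b * β ^ (k + l) := by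
  have := holderTriple_interpExp hs k l
  calc eLpNorm (u • v) (interpExp s (k + l)) μ
      ≤ eLpNorm u (interpExp s k) μ * eLpNorm v (interpExp s l) μ :=
        eLpNorm_smul_le_mul_eLpNorm hv hu
    _ ≤ a * β ^ k * (b * β ^ l) := by gcongr
    _ = a * b * β ^ (k + l) := by ring

lemma eLpNorm_mul_sub_mul_interpExp_le {s : ℕ} (hs : s ≠ 0) {k l : ℕ} (hkl : k + l ≤ s)
    {u u' v v' : α → ℝ} {a a' b b' β : ℝ≥0∞}
    (hu : AEStronglyMeasurable u μ) (hu' : AEStronglyMeasurable u' μ)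
    (hv : AEStronglyMeasurable v μ) (hv' : AEStronglyMeasurable v' μ)
    (hu'a : eLpNorm u' (interpExp s k) μ ≤ a * β ^ k)
    (hvb : eLpNorm v (interpExp s l) μ ≤ b * β ^ l)
    (huu' : eLpNorm (u - u') (interpExp s k) μ ≤ a' * β ^ k)
    (hvv' : eLpNorm (v - v') (interpExp s l) μ ≤ b' * β ^ l) :
    eLpNorm (u * v - u' * v') (interpExp s (k + l)) μ ≤ (a' * b + a * b') * β ^ (k + l) := by
  have hsplit : u * v - u' * v' = (u - u') * v + u' * (v - v') := by ring
  rw [hsplit, add_mul]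
  exact (eLpNorm_add_le ((hu.sub hu').mul hv) (hu'.mul (hv.sub hv'))
    (one_le_interpExp hs hkl)).trans (add_le_add
      (eLpNorm_mul_interpExp_le hs (hu.sub hu') hv huu' hvb)
      (eLpNorm_mul_interpExp_le hs hu' (hv.sub hv') hu'a hvv'))

end InterpolationExponents

section PolynomialOperators

variable {n : ℕ} {ι : Type*} [Fintype ι]

lemma hDeriv_comp_graph [DecidableEq ι] {Φ : ContactSpace n × (ι → ℝ) → ℝ}
    (hΦ : ContDiff ℝ ∞ Φ) {u : ContactSpace n → ι → ℝ} (hu : ContDiff ℝ ∞ u) (j : Fin (2 * n))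
    (x : ContactSpace n) :
    hDeriv n j (fun y => Φ (y, u y)) x = fderiv ℝ Φ (x, u x) (Xvec n j x, 0) +
      ∑ i, fderiv ℝ Φ (x, u x) (0, Pi.single i 1) * hDeriv n j (fun y => u y i) x := by
  have hu' := hu.differentiable (by simp) x
  have hchain : HasFDerivAt (fun y => Φ (y, u y))
      ((fderiv ℝ Φ (x, u x)).comp ((ContinuousLinearMap.id ℝ _).prod (fderiv ℝ u x))) x :=
    (hΦ.differentiable (by simp) (x, u x)).hasFDerivAt.comp x
      ((hasFDerivAt_id x).prodMk hu'.hasFDerivAt)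
  have hsplit (v : ContactSpace n) (w : ι → ℝ) :
      (v, w) = (v, 0) + ∑ i, w i • ((0, Pi.single i 1) : ContactSpace n × (ι → ℝ)) := by
    ext i
    · simp [Prod.fst_sum]
    · simp [Prod.snd_sum, Finset.sum_apply, Pi.single_apply]
  simp only [hDeriv, hchain.fderiv, ContinuousLinearMap.comp_apply,
    ContinuousLinearMap.prod_apply, ContinuousLinearMap.id_apply]
  rw [hsplit (Xvec n j x) _, map_add, map_sum]
  simp only [map_smul, smul_eq_mul, mul_comm, fderiv_apply hu', ContinuousLinearMap.comp_apply,
    ContinuousLinearMap.proj_apply]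

/-- Nonlinear differential operators of weight `k`: polynomials in the horizontal derivatives of
`u`, with coefficients smooth in `(x, u x)`, each monomial containing at most `k` derivatives. -/
inductive IsPolyDiffOp {n : ℕ} {ι : Type*} [Fintype ι] :
    ℕ → ((ContactSpace n → ι → ℝ) → ContactSpace n → ℝ) → Prop
  | comp (Φ : ContactSpace n × (ι → ℝ) → ℝ) (hΦ : ContDiff ℝ ∞ Φ) :
      IsPolyDiffOp 0 fun u x => Φ (x, u x)
  | deriv (I : List (Fin (2 * n))) (i : ι) : IsPolyDiffOp I.length fun u => XI n I fun y => u y i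
  | mul {k l : ℕ} {P Q} (hP : IsPolyDiffOp k P) (hQ : IsPolyDiffOp l Q) :
      IsPolyDiffOp (k + l) fun u x => P u x * Q u x
  | add {k : ℕ} {P Q} (hP : IsPolyDiffOp k P) (hQ : IsPolyDiffOp k Q) :
      IsPolyDiffOp k fun u x => P u x + Q u x
  | mono {k l : ℕ} {P} (hkl : k ≤ l) (hP : IsPolyDiffOp k P) : IsPolyDiffOp l P

namespace IsPolyDiffOp

variable {k l : ℕ} {P : (ContactSpace n → ι → ℝ) → ContactSpace n → ℝ}

lemma contDiff (hP : IsPolyDiffOp k P) {u : ContactSpace n → ι → ℝ} (hu : ContDiff ℝ ∞ u) :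
    ContDiff ℝ ∞ (P u) := by
  induction hP with
  | comp Φ hΦ => exact hΦ.comp (contDiff_id.prodMk hu)
  | deriv I i => exact contDiff_XI (contDiff_pi.1 hu i) I
  | mul _ _ ihP ihQ => exact ihP.mul ihQ
  | add _ _ ihP ihQ => exact ihP.add ihQ
  | mono _ _ ihP => exact ihP

lemma sum {κ : Type*} (S : Finset κ) {P : κ → (ContactSpace n → ι → ℝ) → ContactSpace n → ℝ}
    (hP : ∀ i ∈ S, IsPolyDiffOp k (P i)) : IsPolyDiffOp k fun u x => ∑ i ∈ S, P i u x := by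
  classical
  induction S using Finset.induction_on with
  | empty => exact mono k.zero_le (comp (fun _ => 0) contDiff_const)
  | insert a S ha ih =>
    simp only [Finset.sum_insert ha]
    exact (hP a (Finset.mem_insert_self a S)).add
      (ih fun i hi => hP i (Finset.mem_insert_of_mem hi))

lemma exists_hDeriv_eq (hP : IsPolyDiffOp k P) (j : Fin (2 * n)) :
    ∃ Q, IsPolyDiffOp (k + 1) Q ∧ ∀ u : ContactSpace n → ι → ℝ, ContDiff ℝ ∞ u →
      hDeriv n j (P u) = Q u := by
  classical
  induction hP with
  | comp Φ hΦ =>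
    have hdΦ : ContDiff ℝ ∞ (fderiv ℝ Φ) := hΦ.fderiv_right (by simp)
    have hbase := comp (fun p => fderiv ℝ Φ p (Xvec n j p.1, 0))
      (hdΦ.clm_apply (((contDiff_Xvec j).comp contDiff_fst).prodMk contDiff_const))
    have hfibre (i : ι) := (comp (fun p => fderiv ℝ Φ p (0, Pi.single i 1))
      (hdΦ.clm_apply contDiff_const)).mul (deriv [j] i)
    exact ⟨_, (hbase.mono zero_le_one).add (sum Finset.univ fun i _ => hfibre i),
      fun u hu => funext fun x => hDeriv_comp_graph hΦ hu j x⟩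
  | deriv I i => exact ⟨_, deriv (j :: I) i, fun u _ => rfl⟩
  | @mul k l P Q hP hQ ihP ihQ =>
    obtain ⟨P', hP', hPeq⟩ := ihP
    obtain ⟨Q', hQ', hQeq⟩ := ihQ
    refine ⟨_, (hP.mul hQ').add ((hQ.mul hP').mono (by omega)), fun u hu => funext fun x => ?_⟩
    have hPu := (hP.contDiff hu).differentiable (by simp) x
    have hQu := (hQ.contDiff hu).differentiable (by simp) x
    simp only [← hPeq u hu, ← hQeq u hu, hDeriv, fderiv_fun_mul hPu hQu, add_apply,
      smul_apply, smul_eq_mul]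
  | @add k P Q hP hQ ihP ihQ =>
    obtain ⟨P', hP', hPeq⟩ := ihP
    obtain ⟨Q', hQ', hQeq⟩ := ihQ
    refine ⟨_, hP'.add hQ', fun u hu => funext fun x => ?_⟩
    have hPu := (hP.contDiff hu).differentiable (by simp) x
    have hQu := (hQ.contDiff hu).differentiable (by simp) x
    simp only [← hPeq u hu, ← hQeq u hu, hDeriv, fderiv_fun_add hPu hQu, add_apply]
  | mono hkl _ ihP =>
    obtain ⟨P', hP', hPeq⟩ := ihP
    exact ⟨P', hP'.mono (by omega), hPeq⟩

lemma exists_XI_eq (hP : IsPolyDiffOp k P) (I : List (Fin (2 * n))) :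
    ∃ Q, IsPolyDiffOp (k + I.length) Q ∧ ∀ u : ContactSpace n → ι → ℝ, ContDiff ℝ ∞ u →
      XI n I (P u) = Q u := by
  induction I with
  | nil => exact ⟨P, hP, fun _ _ => rfl⟩
  | cons j I ih =>
    obtain ⟨Q, hQ, hQeq⟩ := ih
    obtain ⟨R, hR, hReq⟩ := hQ.exists_hDeriv_eq j
    exact ⟨R, hR, fun u hu => by rw [← hReq u hu, ← hQeq u hu]; rfl⟩

end IsPolyDiffOp

end PolynomialOperators

section PolynomialEstimates

variable {n s k l : ℕ} {ι : Type*} [Fintype ι] {A W β : ℝ≥0} {D : Set (ContactSpace n)}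
  {u v : ContactSpace n → ι → ℝ}

/-- The bounds produced by interpolating between a sup bound and an `L²` bound on the derivatives of
order `s`: derivatives of order `k ≤ s` have norm at most `A β ^ k` in the exponent `2s/k`. -/
structure InterpBound (s : ℕ) (A β : ℝ≥0) (u : ContactSpace n → ι → ℝ) : Prop where
  contDiff : ContDiff ℝ ∞ u
  nnnorm_le : ∀ x, ‖u x‖₊ ≤ A
  eLpNorm_XI_le : ∀ (I : List (Fin (2 * n))) (i : ι), I.length ≤ s →
    eLpNorm (XI n I fun y => u y i) (interpExp s I.length) volume ≤ A * β ^ I.length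

/-- Two maps with the same interpolation bounds, whose difference satisfies them with an additional
factor `W`: the gain that has to survive composition with a smooth map. -/
structure InterpPair (s : ℕ) (A W β : ℝ≥0) (u v : ContactSpace n → ι → ℝ) : Prop where
  left : InterpBound s A β u
  right : InterpBound s A β v
  sub : InterpBound s (A * W) β (u - v)

lemma InterpPair.eLpNorm_XI_sub_XI_le (h : InterpPair s A W β u v) (I : List (Fin (2 * n)))
    (i : ι) (hI : I.length ≤ s) :
    eLpNorm ((XI n I fun y => u y i) - XI n I fun y => v y i) (interpExp s I.length) volume ≤
      A * W * β ^ I.length := by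
  have hsub : ((XI n I fun y => u y i) - XI n I fun y => v y i) = XI n I fun y => (u - v) y i :=
    funext fun x => (XI_sub isOpen_univ (contDiff_pi.1 h.left.contDiff i).contDiffOn
      (contDiff_pi.1 h.right.contDiff i).contDiffOn I (Set.mem_univ x)).symm
  simpa only [hsub, ENNReal.coe_mul] using h.sub.eLpNorm_XI_le I i hI

lemma exists_nnnorm_le_and_nnnorm_sub_le {X Y : Type*} [NormedAddCommGroup X] [NormedSpace ℝ X]
    [ProperSpace X] [NormedAddCommGroup Y] [NormedSpace ℝ Y] [ProperSpace Y] {Φ : X × Y → E}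
    (hΦ : ContDiff ℝ 1 Φ) {D : Set X} (hD : IsBounded D) (A : ℝ≥0) :
    ∃ C : ℝ≥0, ∀ x ∈ D, ∀ y, ‖y‖₊ ≤ A → ‖Φ (x, y)‖₊ ≤ C ∧
      ∀ z, ‖z‖₊ ≤ A → ‖Φ (x, y) - Φ (x, z)‖₊ ≤ C * ‖y - z‖₊ := by
  obtain ⟨R, hR⟩ := hD.subset_closedBall 0
  set K : Set (X × Y) := Metric.closedBall 0 R ×ˢ Metric.closedBall 0 A
  have hK : IsCompact K := (isCompact_closedBall _ _).prod (isCompact_closedBall _ _)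
  have hKconv : Convex ℝ K := (convex_closedBall _ _).prod (convex_closedBall _ _)
  have hmem {x : X} (hx : x ∈ D) {y : Y} (hy : ‖y‖₊ ≤ A) : (x, y) ∈ K :=
    ⟨hR hx, mem_closedBall_zero_iff.2 hy⟩
  obtain ⟨M, hM⟩ := hK.exists_bound_of_continuousOn hΦ.continuous.continuousOn
  obtain ⟨L, hL⟩ := hΦ.contDiffOn.exists_lipschitzOnWith one_ne_zero hKconv hK
  refine ⟨max M.toNNReal L, fun x hx y hy => ⟨?_, fun z hz => ?_⟩⟩
  · exact le_max_of_le_left (NNReal.coe_le_coe.1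
      ((hM _ (hmem hx hy)).trans (Real.le_coe_toNNReal M)))
  · calc ‖Φ (x, y) - Φ (x, z)‖₊ ≤ L * ‖(x, y) - (x, z)‖₊ := by
          simpa only [← edist_eq_enorm_sub, edist_nndist, nndist_eq_nnnorm, ← ENNReal.coe_mul,
            ENNReal.coe_le_coe] using hL (hmem hx hy) (hmem hx hz)
      _ = L * ‖y - z‖₊ := by simp [Prod.nnnorm_def]
      _ ≤ max M.toNNReal L * ‖y - z‖₊ := by gcongr; exact le_max_right _ _

namespace IsPolyDiffOp

variable {P : (ContactSpace n → ι → ℝ) → ContactSpace n → ℝ}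

lemma aestronglyMeasurable (hP : IsPolyDiffOp k P) (hu : ContDiff ℝ ∞ u)
    {μ : Measure (ContactSpace n)} : AEStronglyMeasurable (P u) μ :=
  (hP.contDiff hu).continuous.aestronglyMeasurable

theorem exists_eLpNorm_le (hP : IsPolyDiffOp k P) (hs : s ≠ 0) (hks : k ≤ s)
    (hD : IsBounded D) (hDm : MeasurableSet D) (A : ℝ≥0) :
    ∃ C : ℝ≥0, ∀ β : ℝ≥0, 1 ≤ β → ∀ u : ContactSpace n → ι → ℝ, InterpBound s A β u →
      eLpNorm (P u) (interpExp s k) (volume.restrict D) ≤ C * β ^ k := by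
  induction hP with
  | comp Φ hΦ =>
    obtain ⟨C, hC⟩ := exists_nnnorm_le_and_nnnorm_sub_le (hΦ.of_le (by simp)) hD A
    refine ⟨C, fun β _ u hu => ?_⟩
    rw [interpExp_zero hs, pow_zero, mul_one, eLpNorm_exponent_top]
    exact eLpNormEssSup_le_of_ae_nnnorm_bound <| ae_restrict_of_forall_mem hDm fun x hx =>
      (hC x hx _ (hu.nnnorm_le x)).1
  | deriv I i =>
    exact ⟨A, fun β _ u hu => (eLpNorm_restrict_le _ _ _ _).trans (hu.eLpNorm_XI_le I i hks)⟩
  | mul hP hQ ihP ihQ =>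
    obtain ⟨C, hC⟩ := ihP (by omega)
    obtain ⟨C', hC'⟩ := ihQ (by omega)
    refine ⟨C * C', fun β hβ u hu => ?_⟩
    rw [ENNReal.coe_mul]
    exact eLpNorm_mul_interpExp_le hs (hP.aestronglyMeasurable hu.contDiff)
      (hQ.aestronglyMeasurable hu.contDiff) (hC β hβ u hu) (hC' β hβ u hu)
  | add hP hQ ihP ihQ =>
    obtain ⟨C, hC⟩ := ihP hks
    obtain ⟨C', hC'⟩ := ihQ hks
    refine ⟨C + C', fun β hβ u hu => ?_⟩
    rw [ENNReal.coe_add, add_mul]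
    exact (eLpNorm_add_le (hP.aestronglyMeasurable hu.contDiff)
      (hQ.aestronglyMeasurable hu.contDiff) (one_le_interpExp hs hks)).trans
      (add_le_add (hC β hβ u hu) (hC' β hβ u hu))
  | mono hkl hP ihP =>
    have : IsFiniteMeasure (volume.restrict D) := ⟨by simpa using hD.measure_lt_top⟩
    obtain ⟨C, hC⟩ := ihP (by omega)
    obtain ⟨V, hV⟩ := exists_eLpNorm_interpExp_le_of_le (volume.restrict D) s hkl
    refine ⟨V * C, fun β hβ u hu => ?_⟩
    rw [ENNReal.coe_mul]
    exact hV _ _ _ (hP.aestronglyMeasurable hu.contDiff) (mod_cast hβ) (hC β hβ u hu)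

theorem exists_eLpNorm_sub_le (hP : IsPolyDiffOp k P) (hs : s ≠ 0) (hks : k ≤ s)
    (hD : IsBounded D) (hDm : MeasurableSet D) (A : ℝ≥0) :
    ∃ C : ℝ≥0, ∀ β W : ℝ≥0, 1 ≤ β → ∀ u v : ContactSpace n → ι → ℝ, InterpPair s A W β u v →
      eLpNorm (P u - P v) (interpExp s k) (volume.restrict D) ≤ C * W * β ^ k := by
  induction hP with
  | comp Φ hΦ =>
    obtain ⟨C, hC⟩ := exists_nnnorm_le_and_nnnorm_sub_le (hΦ.of_le (by simp)) hD A
    refine ⟨C * A, fun β W _ u v h => ?_⟩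
    rw [interpExp_zero hs, pow_zero, mul_one, eLpNorm_exponent_top, ← ENNReal.coe_mul, mul_assoc]
    exact eLpNormEssSup_le_of_ae_nnnorm_bound <| ae_restrict_of_forall_mem hDm fun x hx =>
      ((hC x hx _ (h.left.nnnorm_le x)).2 _ (h.right.nnnorm_le x)).trans
        (by gcongr; exact h.sub.nnnorm_le x)
  | deriv I i =>
    exact ⟨A, fun β W _ u v h => (eLpNorm_restrict_le _ _ _ _).trans
      (h.eLpNorm_XI_sub_XI_le I i hks)⟩
  | mul hP hQ ihP ihQ =>
    obtain ⟨C, hC⟩ := hP.exists_eLpNorm_le hs (by omega) hD hDm A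
    obtain ⟨C', hC'⟩ := hQ.exists_eLpNorm_le hs (by omega) hD hDm A
    obtain ⟨L, hL⟩ := ihP (by omega)
    obtain ⟨L', hL'⟩ := ihQ (by omega)
    refine ⟨L * C' + C * L', fun β W hβ u v h => ?_⟩
    refine (eLpNorm_mul_sub_mul_interpExp_le hs hks (hP.aestronglyMeasurable h.left.contDiff)
      (hP.aestronglyMeasurable h.right.contDiff) (hQ.aestronglyMeasurable h.left.contDiff)
      (hQ.aestronglyMeasurable h.right.contDiff) (hC β hβ v h.right) (hC' β hβ u h.left)
      (hL β W hβ u v h) (hL' β W hβ u v h)).trans_eq ?_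
    push_cast
    ring
  | @add k P Q hP hQ ihP ihQ =>
    obtain ⟨C, hC⟩ := ihP hks
    obtain ⟨C', hC'⟩ := ihQ hks
    refine ⟨C + C', fun β W hβ u v h => ?_⟩
    change eLpNorm (P u + Q u - (P v + Q v)) _ _ ≤ _
    rw [ENNReal.coe_add, add_mul, add_mul, add_sub_add_comm]
    exact (eLpNorm_add_le
      ((hP.aestronglyMeasurable h.left.contDiff).sub (hP.aestronglyMeasurable h.right.contDiff))
      ((hQ.aestronglyMeasurable h.left.contDiff).sub (hQ.aestronglyMeasurable h.right.contDiff))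
      (one_le_interpExp hs hks)).trans
      (add_le_add (hC β W hβ u v h) (hC' β W hβ u v h))
  | @mono k l P hkl hP ihP =>
    have : IsFiniteMeasure (volume.restrict D) := ⟨by simpa using hD.measure_lt_top⟩
    obtain ⟨C, hC⟩ := ihP (by omega)
    obtain ⟨V, hV⟩ := exists_eLpNorm_interpExp_le_of_le (volume.restrict D) s hkl
    refine ⟨V * C, fun β W hβ u v h => ?_⟩
    rw [ENNReal.coe_mul, mul_assoc (V : ℝ≥0∞)]
    exact hV _ _ _ ((hP.aestronglyMeasurable h.left.contDiff).sub
      (hP.aestronglyMeasurable h.right.contDiff)) (mod_cast hβ) (hC β W hβ u v h)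

end IsPolyDiffOp

end PolynomialEstimates

section GagliardoNirenberg

lemma integral_mul_fderiv_eq_zero {V : Type*} [NormedAddCommGroup V] [NormedSpace ℝ V]
    [FiniteDimensional ℝ V] [MeasurableSpace V] [BorelSpace V] {μ : Measure V}
    [μ.IsAddHaarMeasure] {c h : V → ℝ} {v : V} (hc : ContDiff ℝ 1 c)
    (hcv : ∀ x, fderiv ℝ c x v = 0) (hh : ContDiff ℝ 1 h) (hsupp : HasCompactSupport h) :
    Integrable (fun x => c x * fderiv ℝ h x v) μ ∧ ∫ x, c x * fderiv ℝ h x v ∂μ = 0 := by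
  have hint : Integrable (fun x => c x * fderiv ℝ h x v) μ :=
    (hc.continuous.mul ((hh.continuous_fderiv one_ne_zero).clm_apply continuous_const)
      ).integrable_of_hasCompactSupport (hsupp.fderiv_apply ℝ v).mul_left
  have hprod : Integrable (fun x => c x * h x) μ :=
    (hc.continuous.mul hh.continuous).integrable_of_hasCompactSupport hsupp.mul_left
  refine ⟨hint, ?_⟩
  rw [integral_mul_fderiv_eq_neg_fderiv_mul_of_integrable (by simp [hcv]) hint hprod
    (fun x _ => hc.differentiable one_ne_zero x) (fun x _ => hh.differentiable one_ne_zero x)]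
  simp [hcv]

variable {n : ℕ}

lemma integral_hDeriv_eq_zero {h : ContactSpace n → ℝ} (hh : ContDiff ℝ 1 h)
    (hsupp : HasCompactSupport h) (j : Fin (2 * n)) : ∫ x, hDeriv n j h x = 0 := by
  obtain ⟨hint₁, hpartial⟩ := integral_mul_fderiv_eq_zero (μ := volume) (c := fun _ => 1)
    (v := Pi.single j.castSucc 1) contDiff_const (by simp) hh hsupp
  obtain ⟨hint₂, hreeb⟩ := integral_mul_fderiv_eq_zero (μ := volume)
    (v := Pi.single (Fin.last (2 * n)) 1) (reebCoeff n j).contDiff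
    (by simp [reebCoeff_single_last]) hh hsupp
  simp only [one_mul] at hint₁ hpartial
  simp only [hDeriv, Xvec_eq_single_add, map_add, map_smul, smul_eq_mul]
  rw [integral_add hint₁ hint₂, hpartial, hreeb, add_zero]

lemma integral_hDeriv_mul_eq_neg {u w : ContactSpace n → ℝ} (hu : ContDiff ℝ 1 u)
    (hw : ContDiff ℝ 1 w) (hsupp : HasCompactSupport u) (j : Fin (2 * n)) :
    ∫ x, hDeriv n j u x * w x = -∫ x, u x * hDeriv n j w x := by
  have hX {g : ContactSpace n → ℝ} (hg : ContDiff ℝ 1 g) : Continuous (hDeriv n j g) :=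
    (hg.continuous_fderiv one_ne_zero).clm_apply (contDiff_Xvec j).continuous
  have hprod (x : ContactSpace n) :
      hDeriv n j (fun y => u y * w y) x = hDeriv n j u x * w x + u x * hDeriv n j w x := by
    simp only [hDeriv, fderiv_fun_mul (hu.differentiable one_ne_zero x)
      (hw.differentiable one_ne_zero x), add_apply, smul_apply, smul_eq_mul]
    ring
  have hzero := integral_hDeriv_eq_zero (hu.mul hw) hsupp.mul_right j
  simp only [hprod] at hzero
  rw [integral_add] at hzero
  · exact eq_neg_of_add_eq_zero_left hzero
  · exact ((hX hu).mul hw.continuous).integrable_of_hasCompactSupport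
      (hasCompactSupport_XI hsupp [j]).mul_right
  · exact (hu.continuous.mul (hX hw)).integrable_of_hasCompactSupport hsupp.mul_right

lemma hasDerivAt_abs_rpow_mul_self {p : ℝ} (hp : 0 < p) (t : ℝ) :
    HasDerivAt (fun t : ℝ => |t| ^ p * t) ((p + 1) * |t| ^ p) t := by
  have hcont : Continuous fun t : ℝ => |t| ^ p :=
    continuous_abs.rpow_const fun _ => Or.inr hp.le
  refine hasDerivAt_of_hasDerivAt_of_ne' (x := 0) (g := fun t => (p + 1) * |t| ^ p) (fun y hy => ?_)
    (hcont.mul continuous_id).continuousAt (hcont.const_mul _).continuousAt t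
  refine (((hasDerivAt_abs hy).rpow_const (p := p) (Or.inl (abs_ne_zero.2 hy))).mul
    (hasDerivAt_id y)).congr_deriv ?_
  have hpow : |y| ^ p = |y| ^ (p - 1) * |y| := by
    rw [← Real.rpow_add_one (abs_ne_zero.2 hy), sub_add_cancel]
  rw [hpow, ← sign_mul_self y, id]
  ring

lemma contDiff_abs_rpow_mul_self {p : ℝ} (hp : 0 < p) :
    ContDiff ℝ 1 fun t : ℝ => |t| ^ p * t := by
  rw [contDiff_one_iff_deriv, funext fun t => (hasDerivAt_abs_rpow_mul_self hp t).deriv]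
  exact ⟨fun t => (hasDerivAt_abs_rpow_mul_self hp t).differentiableAt,
    (continuous_abs.rpow_const fun _ => Or.inr hp.le).const_mul _⟩

lemma integral_abs_hDeriv_rpow {u : ContactSpace n → ℝ} (hu : ContDiff ℝ ∞ u)
    (hsupp : HasCompactSupport u) (j : Fin (2 * n)) {p : ℝ} (hp : 2 < p) :
    ∫ x, |hDeriv n j u x| ^ p =
      -(p - 1) * ∫ x, |hDeriv n j u x| ^ (p - 2) * (u x * hDeriv n j (hDeriv n j u) x) := by
  have hv : ContDiff ℝ ∞ (hDeriv n j u) := contDiff_XI hu [j]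
  have hpow (t : ℝ) : |t| ^ p = t * (|t| ^ (p - 2) * t) := by
    rw [mul_left_comm, ← abs_mul_abs_self t, ← sq, ← Real.rpow_natCast,
      ← Real.rpow_add_of_nonneg (abs_nonneg t) (by linarith) (by simp)]
    norm_num
  have hchain (x : ContactSpace n) :
      hDeriv n j (fun y => |hDeriv n j u y| ^ (p - 2) * hDeriv n j u y) x =
        (p - 1) * |hDeriv n j u x| ^ (p - 2) * hDeriv n j (hDeriv n j u) x := by
    have hcomp : HasFDerivAt (fun y => |hDeriv n j u y| ^ (p - 2) * hDeriv n j u y) _ x :=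
      (hasDerivAt_abs_rpow_mul_self (sub_pos.2 hp) (hDeriv n j u x)).comp_hasFDerivAt x
        (hv.differentiable (by simp) x).hasFDerivAt
    rw [hDeriv, hcomp.fderiv, show p - 2 + 1 = p - 1 by ring]
    rfl
  simp only [hpow (hDeriv n j u _)]
  have hφ : ContDiff ℝ 1 fun y => |hDeriv n j u y| ^ (p - 2) * hDeriv n j u y :=
    (contDiff_abs_rpow_mul_self (sub_pos.2 hp)).comp (hv.of_le (by simp))
  rw [integral_hDeriv_mul_eq_neg (hu.of_le (by simp)) hφ hsupp, neg_mul, ← integral_const_mul]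
  simp only [hchain]
  congr 2 with x
  ring

lemma eLpNorm_hDeriv_rpow_le {u : ContactSpace n → ℝ} (hu : ContDiff ℝ ∞ u)
    (hsupp : HasCompactSupport u) (j : Fin (2 * n)) {p : ℝ} (hp : 2 < p) :
    eLpNorm (hDeriv n j u) (ENNReal.ofReal p) volume ^ p ≤ ENNReal.ofReal (p - 1) *
      eLpNorm (fun x => |hDeriv n j u x| ^ (p - 2) * (u x * hDeriv n j (hDeriv n j u) x))
        1 volume := by
  have hvc : Continuous (hDeriv n j u) := (contDiff_XI hu [j]).continuous
  have hrpow {q : ℝ} (hq : 0 < q) : Continuous fun x => |hDeriv n j u x| ^ q :=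
    hvc.abs.rpow_const fun _ => Or.inr hq.le
  have hint : Integrable fun x => |hDeriv n j u x| ^ p :=
    (hrpow (by linarith)).integrable_of_hasCompactSupport
      ((hasCompactSupport_XI hsupp [j]).comp_left (g := fun t : ℝ => |t| ^ p)
        (by simp [show p ≠ 0 by linarith]))
  have hint' : Integrable fun x =>
      |hDeriv n j u x| ^ (p - 2) * (u x * hDeriv n j (hDeriv n j u) x) :=
    ((hrpow (sub_pos.2 hp)).mul (hu.continuous.mul
      (contDiff_XI hu [j, j]).continuous)).integrable_of_hasCompactSupport
        hsupp.mul_right.mul_left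
  have hnorm : eLpNorm (hDeriv n j u) (ENNReal.ofReal p) volume ^ p =
      eLpNorm (fun x => |hDeriv n j u x| ^ p) 1 volume := by
    simpa using (eLpNorm_norm_rpow (p := 1) (μ := volume) (hDeriv n j u)
      (show 0 < p by linarith)).symm
  rw [hnorm, eLpNorm_one_eq_lintegral_enorm, eLpNorm_one_eq_lintegral_enorm,
    ← ofReal_integral_norm_eq_lintegral_enorm hint,
    ← ofReal_integral_norm_eq_lintegral_enorm hint', ← ENNReal.ofReal_mul (by linarith)]
  refine ENNReal.ofReal_le_ofReal ?_
  calc ∫ x, ‖|hDeriv n j u x| ^ p‖ = ∫ x, |hDeriv n j u x| ^ p := by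
        simp only [Real.norm_of_nonneg (Real.rpow_nonneg (abs_nonneg _) p)]
    _ ≤ ‖∫ x, |hDeriv n j u x| ^ p‖ := le_abs_self _
    _ = (p - 1) * ‖∫ x, |hDeriv n j u x| ^ (p - 2) *
          (u x * hDeriv n j (hDeriv n j u) x)‖ := by
        rw [integral_abs_hDeriv_rpow hu hsupp j hp, norm_mul, norm_neg,
          Real.norm_of_nonneg (by linarith)]
    _ ≤ _ := by
        gcongr
        · linarith
        · exact norm_integral_le_integral_norm _

lemma eLpNorm_abs_rpow_mul_mul_le {α : Type*} [MeasurableSpace α] {μ : Measure α}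
    {u v w : α → ℝ} (hu : AEStronglyMeasurable u μ) (hv : AEStronglyMeasurable v μ)
    (hw : AEStronglyMeasurable w μ) {p : ℝ} (hp : 2 < p) {q r : ℝ≥0∞}
    (hqr : ENNReal.HolderTriple q r (ENNReal.ofReal (p / 2))) :
    eLpNorm (fun x => |v x| ^ (p - 2) * (u x * w x)) 1 μ ≤
      eLpNorm v (ENNReal.ofReal p) μ ^ (p - 2) * (eLpNorm u q μ * eLpNorm w r μ) := by
  have hp0 : 0 < p - 2 := sub_pos.2 hp
  have hconj : (p / (p - 2)).HolderConjugate (p / 2) :=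
    Real.holderConjugate_iff.2 ⟨(one_lt_div hp0).2 (by linarith), by field_simp; ring⟩
  have hpow : eLpNorm (fun x => |v x| ^ (p - 2)) (ENNReal.ofReal (p / (p - 2))) μ =
      eLpNorm v (ENNReal.ofReal p) μ ^ (p - 2) := by
    rw [← div_mul_cancel₀ p hp0.ne', ENNReal.ofReal_mul (by positivity),
      div_mul_cancel₀ p hp0.ne', ← eLpNorm_norm_rpow v hp0]
    rfl
  have hvpow : AEStronglyMeasurable (fun x => |v x| ^ (p - 2)) μ :=
    (hv.norm.aemeasurable.pow_const _).aestronglyMeasurable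
  calc eLpNorm (fun x => |v x| ^ (p - 2) * (u x * w x)) 1 μ
      ≤ eLpNorm (fun x => |v x| ^ (p - 2)) (ENNReal.ofReal (p / (p - 2))) μ *
          eLpNorm (fun x => u x * w x) (ENNReal.ofReal (p / 2)) μ :=
        eLpNorm_smul_le_mul_eLpNorm (φ := fun x => |v x| ^ (p - 2)) (f := fun x => u x * w x)
          (hu.mul hw) hvpow (hpqr := by simpa using hconj.ennrealOfReal)
    _ ≤ _ := by
        rw [hpow]
        gcongr
        exact eLpNorm_smul_le_mul_eLpNorm (φ := u) (f := w) hw hu (hpqr := hqr)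

lemma eLpNorm_hDeriv_sq_le {u : ContactSpace n → ℝ} (hu : ContDiff ℝ ∞ u)
    (hsupp : HasCompactSupport u) (j : Fin (2 * n)) {p : ℝ} (hp : 2 < p) {q r : ℝ≥0∞}
    (hqr : ENNReal.HolderTriple q r (ENNReal.ofReal (p / 2))) :
    eLpNorm (hDeriv n j u) (ENNReal.ofReal p) volume ^ 2 ≤ ENNReal.ofReal (p - 1) *
      (eLpNorm u q volume * eLpNorm (hDeriv n j (hDeriv n j u)) r volume) := by
  have hvc : Continuous (hDeriv n j u) := (contDiff_XI hu [j]).continuous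
  have hwc : Continuous (hDeriv n j (hDeriv n j u)) := (contDiff_XI hu [j, j]).continuous
  have hmain := (eLpNorm_hDeriv_rpow_le hu hsupp j hp).trans (mul_le_mul_right
    (eLpNorm_abs_rpow_mul_mul_le hu.continuous.aestronglyMeasurable
      hvc.aestronglyMeasurable hwc.aestronglyMeasurable hp hqr) _)
  have htop : eLpNorm (hDeriv n j u) (ENNReal.ofReal p) volume ≠ ⊤ :=
    (hvc.memLp_of_hasCompactSupport (hasCompactSupport_XI hsupp [j])).eLpNorm_ne_top
  generalize eLpNorm (hDeriv n j u) (ENNReal.ofReal p) volume = A at hmain htop ⊢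
  rcases eq_or_ne A 0 with rfl | hA
  · simp
  have hsplit : A ^ p = A ^ (p - 2) * A ^ 2 := by
    rw [← ENNReal.rpow_natCast, ← ENNReal.rpow_add _ _ hA htop]
    norm_num
  rw [hsplit, mul_left_comm] at hmain
  exact (ENNReal.mul_le_mul_iff_right (ENNReal.rpow_pos (pos_iff_ne_zero.2 hA) htop).ne'
    (ENNReal.rpow_ne_top_of_nonneg (sub_pos.2 hp).le htop)).1 hmain

lemma eLpNorm_hDeriv_interpExp_sq_le {s k : ℕ} (hks : k + 2 ≤ s) {u : ContactSpace n → ℝ}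
    (hu : ContDiff ℝ ∞ u) (hsupp : HasCompactSupport u) (j : Fin (2 * n)) :
    eLpNorm (hDeriv n j u) (interpExp s (k + 1)) volume ^ 2 ≤ 2 * s *
      (eLpNorm u (interpExp s k) volume *
        eLpNorm (hDeriv n j (hDeriv n j u)) (interpExp s (k + 2)) volume) := by
  have hp : (2 : ℝ) < 2 * s / (k + 1 : ℕ) := by
    rw [lt_div_iff₀ (by positivity)]
    exact_mod_cast (show 2 * (k + 1) < 2 * s by omega)
  have hhalf : interpExp s (k + (k + 2)) = ENNReal.ofReal (2 * s / (k + 1 : ℕ) / 2) := by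
    rw [interpExp_eq_ofReal s (by omega), div_div]
    push_cast
    ring_nf
  have htriple := holderTriple_interpExp (s := s) (by omega) k (k + 2)
  rw [hhalf] at htriple
  rw [interpExp_eq_ofReal s k.succ_pos]
  refine (eLpNorm_hDeriv_sq_le hu hsupp j hp htriple).trans (mul_le_mul_left ?_ _)
  calc ENNReal.ofReal (2 * s / (k + 1 : ℕ) - 1) ≤ ENNReal.ofReal (2 * s) :=
        ENNReal.ofReal_le_ofReal ((sub_le_self _ zero_le_one).trans
          (div_le_self (by positivity) (by simp)))
    _ = 2 * s := by
        rw [ENNReal.ofReal_mul zero_le_two, ENNReal.ofReal_natCast, ENNReal.ofReal_ofNat]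

/-- The largest `L^{2s/k}` norm among the horizontal derivatives of order `k` of `u`. -/
def maxDerivNorm (s : ℕ) (u : ContactSpace n → ℝ) (k : ℕ) : ℝ≥0 :=
  Finset.univ.sup fun I : Fin k → Fin (2 * n) =>
    (eLpNorm (XI n (List.ofFn I) u) (interpExp s k) volume).toNNReal

lemma maxDerivNorm_le_iff {s : ℕ} {u : ContactSpace n → ℝ} (hu : ContDiff ℝ ∞ u)
    (hsupp : HasCompactSupport u) {k : ℕ} {c : ℝ≥0} : maxDerivNorm s u k ≤ c ↔
      ∀ I : List (Fin (2 * n)), I.length = k → eLpNorm (XI n I u) (interpExp s k) volume ≤ c := by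
  have htop (I : List (Fin (2 * n))) : eLpNorm (XI n I u) (interpExp s k) volume ≠ ⊤ :=
    ((contDiff_XI hu I).continuous.memLp_of_hasCompactSupport
      (hasCompactSupport_XI hsupp I)).eLpNorm_ne_top
  simp only [maxDerivNorm, Finset.sup_le_iff, Finset.mem_univ, true_imp_iff,
    ← ENNReal.coe_le_coe, ENNReal.coe_toNNReal (htop _)]
  refine ⟨?_, fun h I => h _ (List.length_ofFn)⟩
  rintro h I rfl
  simpa only [List.ofFn_get] using h I.get

lemma eLpNorm_XI_le_maxDerivNorm {s : ℕ} {u : ContactSpace n → ℝ} (hu : ContDiff ℝ ∞ u)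
    (hsupp : HasCompactSupport u) {k : ℕ} {I : List (Fin (2 * n))} (hI : I.length = k) :
    eLpNorm (XI n I u) (interpExp s k) volume ≤ maxDerivNorm s u k :=
  (maxDerivNorm_le_iff hu hsupp).1 le_rfl I hI

lemma maxDerivNorm_sq_le {s k : ℕ} (hks : k + 2 ≤ s) {u : ContactSpace n → ℝ}
    (hu : ContDiff ℝ ∞ u) (hsupp : HasCompactSupport u) :
    maxDerivNorm s u (k + 1) ^ 2 ≤ 2 * s * (maxDerivNorm s u k * maxDerivNorm s u (k + 2)) := by
  rw [← NNReal.le_sqrt_iff_sq_le, maxDerivNorm_le_iff hu hsupp]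
  rintro (_ | ⟨j, J⟩) hJ
  · simp at hJ
  replace hJ : J.length = k := by simpa using hJ
  have hsq := eLpNorm_hDeriv_interpExp_sq_le hks (contDiff_XI hu J) (hasCompactSupport_XI hsupp J) j
  have h0 := eLpNorm_XI_le_maxDerivNorm (s := s) hu hsupp hJ
  have h2 := eLpNorm_XI_le_maxDerivNorm (s := s) hu hsupp
    (show (j :: j :: J).length = k + 2 by simp [hJ])
  rw [← ENNReal.pow_le_pow_left_iff two_ne_zero, ← ENNReal.coe_pow, NNReal.sq_sqrt]
  push_cast
  exact hsq.trans (by gcongr; exact h2)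

lemma le_of_sq_le_mul_of_le {m : ℕ → ℝ≥0} {s : ℕ} {B : ℝ≥0}
    (hm : ∀ k, k + 2 ≤ s → m (k + 1) ^ 2 ≤ m k * m (k + 2)) (h0 : m 0 ≤ B) (hs : m s ≤ B) :
    ∀ k ≤ s, m k ≤ B := by
  by_contra! hexceed
  obtain ⟨hks, hBk⟩ := Nat.find_spec hexceed
  obtain ⟨k, hk⟩ : ∃ k, Nat.find hexceed = k + 1 :=
    Nat.exists_eq_add_one_of_ne_zero fun h => (h ▸ hBk).not_ge h0
  rw [hk] at hks hBk
  have hstep : m k < m (k + 1) := by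
    refine lt_of_le_of_lt ?_ hBk
    simpa [show k ≤ s by omega] using Nat.find_min hexceed (m := k) (by omega)
  have hgrow (l : ℕ) (hl : k + l + 1 ≤ s) : m (k + l) < m (k + l + 1) := by
    induction l with
    | zero => exact hstep
    | succ l ih =>
      specialize ih (by omega)
      by_contra! hle
      refine (hm (k + l) hl).not_gt ?_
      calc m (k + l) * m (k + l + 2) ≤ m (k + l) * m (k + l + 1) := by gcongr; exact hle
        _ < m (k + l + 1) * m (k + l + 1) := by
          gcongr
          exact ih.pos
        _ = _ := (sq _).symm
  have hmono (l : ℕ) (hl : k + 1 + l ≤ s) : B < m (k + 1 + l) := by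
    induction l with
    | zero => exact hBk
    | succ l ih =>
      refine (ih (by omega)).trans ?_
      simpa only [add_assoc, add_left_comm, add_comm] using hgrow (l + 1) (by omega)
  have := hmono (s - (k + 1)) (by omega)
  rw [Nat.add_sub_cancel' hks] at this
  exact this.not_ge hs

lemma le_pow_mul_of_sq_le {a : ℕ → ℝ≥0} {s : ℕ} {C A β : ℝ≥0} (hC : 1 ≤ C) (hβ : 0 < β)
    (ha : ∀ k, k + 2 ≤ s → a (k + 1) ^ 2 ≤ C * (a k * a (k + 2))) (h0 : a 0 ≤ A)
    (hs : a s ≤ A * β ^ s) {k : ℕ} (hk : k ≤ s) : a k ≤ C ^ (s * s) * A * β ^ k := by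
  have hbound : a k * C ^ (k * k) / β ^ k ≤ C ^ (s * s) * A := by
    refine le_of_sq_le_mul_of_le (m := fun k => a k * C ^ (k * k) / β ^ k) (fun k hk => ?_)
      ?_ ?_ k hk
    · calc (a (k + 1) * C ^ ((k + 1) * (k + 1)) / β ^ (k + 1)) ^ 2
          = a (k + 1) ^ 2 * (C ^ ((k + 1) * (k + 1)) / β ^ (k + 1)) ^ 2 := by ring
        _ ≤ C * (a k * a (k + 2)) * (C ^ ((k + 1) * (k + 1)) / β ^ (k + 1)) ^ 2 := by
          gcongr
          exact ha k hk
        _ = a k * a (k + 2) * C ^ (2 * (k + 1) * (k + 1) + 1) / β ^ (2 * (k + 1)) := by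
          field_simp
          ring
        _ ≤ a k * a (k + 2) * C ^ (2 * (k + 1) * (k + 1) + 2) / β ^ (2 * (k + 1)) := by
          gcongr
          norm_num
        _ = a k * C ^ (k * k) / β ^ k * (a (k + 2) * C ^ ((k + 2) * (k + 2)) / β ^ (k + 2)) := by
          field_simp
          ring
    · simpa using h0.trans (le_mul_of_one_le_left' (one_le_pow₀ hC))
    · rw [div_le_iff₀ (by positivity)]
      calc a s * C ^ (s * s) ≤ A * β ^ s * C ^ (s * s) := by gcongr
        _ = C ^ (s * s) * A * β ^ s := by ring
  rw [div_le_iff₀ (by positivity)] at hbound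
  exact (le_mul_of_one_le_right' (one_le_pow₀ hC)).trans hbound

lemma eLpNorm_XI_interpExp_le {s : ℕ} (hs : s ≠ 0) {A β : ℝ≥0} (hβ : 0 < β)
    {u : ContactSpace n → ℝ} (hu : ContDiff ℝ ∞ u) (hsupp : HasCompactSupport u)
    (hA : ∀ x, ‖u x‖₊ ≤ A)
    (htop : ∀ I : List (Fin (2 * n)), I.length = s → eLpNorm (XI n I u) 2 volume ≤ A * β ^ s)
    (I : List (Fin (2 * n))) (hI : I.length ≤ s) :
    eLpNorm (XI n I u) (interpExp s I.length) volume ≤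
      (2 * s) ^ (s * s) * A * β ^ I.length := by
  have hzero : maxDerivNorm s u 0 ≤ A := (maxDerivNorm_le_iff hu hsupp).2 fun J hJ => by
    rw [List.length_eq_zero_iff.1 hJ, interpExp_zero hs, eLpNorm_exponent_top]
    exact eLpNormEssSup_le_of_ae_nnnorm_bound (.of_forall hA)
  have hmax : maxDerivNorm s u s ≤ A * β ^ s := (maxDerivNorm_le_iff hu hsupp).2 fun J hJ => by
    simpa [interpExp_self hs] using htop J hJ
  have hC : (1 : ℝ≥0) ≤ 2 * s := by
    have : 1 ≤ 2 * s := by omega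
    exact_mod_cast this
  have hle := le_pow_mul_of_sq_le hC hβ (fun k hk => maxDerivNorm_sq_le hk hu hsupp) hzero hmax hI
  exact_mod_cast (maxDerivNorm_le_iff hu hsupp).1 hle I rfl

end GagliardoNirenberg
section SobolevBound

variable {n : ℕ}

/-- The transvection `q ↦ q + (∑ₖ cₖ(a) qₖ) • e_{2n}`, where `cₖ` is `reebCoeff n k`. It maps `e_k`
to `X_k(a)`, hence turns partial derivatives into horizontal ones where the `cₖ` agree with their
values at `a`. -/
def shear (a : ContactSpace n) : ContactSpace n ≃L[ℝ] ContactSpace n :=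
  (LinearEquiv.transvection (v := Pi.single (Fin.last (2 * n)) (1 : ℝ))
    (f := ∑ k : Fin (2 * n), reebCoeff n k a • LinearMap.proj k.castSucc)
    (by simp [Fin.castSucc_ne_last])).toContinuousLinearEquiv

lemma shear_apply (a q : ContactSpace n) :
    shear a q =
      q + (∑ k, reebCoeff n k a * q k.castSucc) • Pi.single (Fin.last (2 * n)) (1 : ℝ) := by
  simp [shear, LinearMap.transvection.apply]

lemma shear_single_castSucc (a : ContactSpace n) (k : Fin (2 * n)) :
    shear a (Pi.single k.castSucc 1) =
      Pi.single k.castSucc 1 + reebCoeff n k a • Pi.single (Fin.last (2 * n)) 1 := by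
  simp [shear_apply, Pi.single_apply]

lemma shear_single_last (a : ContactSpace n) :
    shear a (Pi.single (Fin.last (2 * n)) 1) = Pi.single (Fin.last (2 * n)) 1 := by
  simp [shear_apply, Fin.castSucc_ne_last]

lemma shear_apply_castSucc (a q : ContactSpace n) (k : Fin (2 * n)) :
    shear a q k.castSucc = q k.castSucc := by
  simp [shear_apply, Fin.castSucc_ne_last]

lemma shear_symm_apply_castSucc (a q : ContactSpace n) (k : Fin (2 * n)) :
    (shear a).symm q k.castSucc = q k.castSucc := by
  rw [← shear_apply_castSucc a ((shear a).symm q), ContinuousLinearEquiv.apply_symm_apply]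

lemma measurePreserving_shear (a : ContactSpace n) : MeasurePreserving (shear a) := by
  refine ⟨(shear a).continuous.measurable, ?_⟩
  have hdet : LinearMap.det (shear a : ContactSpace n →ₗ[ℝ] ContactSpace n) = 1 := by
    simp [shear, Fin.castSucc_ne_last]
  have := Measure.map_linearMap_addHaar_eq_smul_addHaar (volume : Measure (ContactSpace n))
    (f := (shear a : ContactSpace n →ₗ[ℝ] ContactSpace n)) (by simp [hdet])
  simpa [hdet] using this

lemma fderiv_comp_shear_single_castSucc {h : ContactSpace n → E} {a q : ContactSpace n}
    (hh : DifferentiableAt ℝ h (shear a q)) {k : Fin (2 * n)}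
    (hk : reebCoeff n k (shear a q) = reebCoeff n k a) :
    fderiv ℝ (h ∘ shear a) q (Pi.single k.castSucc 1) = hDeriv n k h (shear a q) := by
  rw [fderiv_comp _ hh (shear a).differentiableAt, ContinuousLinearMap.comp_apply,
    ContinuousLinearEquiv.fderiv, ContinuousLinearEquiv.coe_coe, shear_single_castSucc, ← hk,
    ← Xvec_eq_single_add, hDeriv]

lemma fderiv_comp_shear_single_last {h : ContactSpace n → E} {a q : ContactSpace n}
    (hh : DifferentiableAt ℝ h (shear a q)) :
    fderiv ℝ (h ∘ shear a) q (Pi.single (Fin.last (2 * n)) 1) = T0Deriv n h (shear a q) := by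
  rw [fderiv_comp _ hh (shear a).differentiableAt, ContinuousLinearMap.comp_apply,
    ContinuousLinearEquiv.fderiv, ContinuousLinearEquiv.coe_coe, shear_single_last]
  rfl

lemma enorm_le_lintegral_enorm_fderiv_update {ι : Type*} [Fintype ι] [DecidableEq ι]
    {h : (ι → ℝ) → E} (hh : ContDiff ℝ 1 h) (hsupp : HasCompactSupport h) (q : ι → ℝ) (i : ι) :
    ‖h q‖ₑ ≤ ∫⁻ t, ‖fderiv ℝ h (Function.update q i t) (Pi.single i 1)‖ₑ :=
  calc ‖h q‖ₑ = ‖(h ∘ Function.update q i) (q i)‖ₑ := by simp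
    _ ≤ ∫⁻ t in Set.Iic (q i), ‖deriv (h ∘ Function.update q i) t‖ₑ :=
      HasCompactSupport.enorm_le_lintegral_Ici_deriv
        (hh.comp (contDiff_update 1 q i))
        (hsupp.comp_isClosedEmbedding (isClosedEmbedding_update q i)) _
    _ ≤ ∫⁻ t, ‖deriv (h ∘ Function.update q i) t‖ₑ := setLIntegral_le_lintegral _ _
    _ = ∫⁻ t, ‖fderiv ℝ h (Function.update q i t) (Pi.single i 1)‖ₑ := by
      refine lintegral_congr fun t => ?_
      rw [fderiv_comp_deriv _ (hh.differentiable one_ne_zero).differentiableAt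
        (hasDerivAt_update q i t).differentiableAt, (hasDerivAt_update q i t).deriv]

lemma lmarginal_enorm_le_lmarginal_enorm_fderiv {ι : Type*} [Fintype ι] [DecidableEq ι]
    {h : (ι → ℝ) → E} (hh : ContDiff ℝ 1 h) (hsupp : HasCompactSupport h) {S : Finset ι} {i : ι}
    (hi : i ∉ S) (p : ι → ℝ) :
    (∫⋯∫⁻_S, (fun q => ‖h q‖ₑ) ∂fun _ => volume) p ≤
      (∫⋯∫⁻_insert i S, (fun q => ‖fderiv ℝ h q (Pi.single i 1)‖ₑ) ∂fun _ => volume) p := by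
  have hcont : Continuous fun q => fderiv ℝ h q (Pi.single i 1) :=
    (hh.continuous_fderiv one_ne_zero).clm_apply continuous_const
  rw [lmarginal_insert' _ hcont.enorm.measurable hi]
  exact lmarginal_mono (fun q => enorm_le_lintegral_enorm_fderiv_update hh hsupp q i) p

lemma exists_enorm_le_lmarginal_XI_comp_shear {u : ContactSpace n → E} (hu : ContDiff ℝ ∞ u)
    (hsupp : HasCompactSupport u) (a : ContactSpace n) {k : ℕ} (hk : k ≤ 2 * n) :
    ∃ I : List (Fin (2 * n)), I.length = k ∧ ‖u a‖ₑ ≤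
      (∫⋯∫⁻_{i : Fin (2 * n + 1) | (i : ℕ) < k}, (fun q => ‖XI n I u (shear a q)‖ₑ)
        ∂fun _ => volume) ((shear a).symm a) := by
  induction k with
  | zero => exact ⟨[], rfl, by simp [XI]⟩
  | succ k ih =>
    obtain ⟨I, hI, hle⟩ := ih (by omega)
    refine ⟨⟨k, hk⟩ :: I, by simp [hI], hle.trans ?_⟩
    have hsmooth := contDiff_XI hu I
    have hmem : (⟨k, hk⟩ : Fin (2 * n)).castSucc ∉
        ({i : Fin (2 * n + 1) | (i : ℕ) < k} : Finset _) := by simp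
    have hinsert : insert (⟨k, hk⟩ : Fin (2 * n)).castSucc
        ({i : Fin (2 * n + 1) | (i : ℕ) < k} : Finset _) =
        ({i : Fin (2 * n + 1) | (i : ℕ) < k + 1} : Finset _) := by
      ext i
      simp [Fin.ext_iff]
      omega
    refine (lmarginal_enorm_le_lmarginal_enorm_fderiv (h := XI n I u ∘ shear a)
      ((hsmooth.comp (shear a).contDiff).of_le (by simp))
      ((hasCompactSupport_XI hsupp I).comp_homeomorph (shear a).toHomeomorph) hmem _).trans_eq ?_
    rw [hinsert]
    refine lintegral_congr fun y => ?_
    refine congrArg (‖·‖ₑ)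
      (fderiv_comp_shear_single_castSucc (hsmooth.differentiable (by simp) _) ?_)
    -- The coordinate `x_{n+k}` is not integrated over yet, so it keeps its value at `a`.
    unfold reebCoeff
    split_ifs with hkn
    · replace hkn : k < n := hkn
      refine (shear_apply_castSucc a _ ⟨n + k, by omega⟩).trans ?_
      rw [Function.updateFinset, dif_neg (by simp; omega)]
      exact shear_symm_apply_castSucc a a ⟨n + k, by omega⟩
    · rfl

lemma exists_enorm_le_eLpNorm_XI_add (hn : n ≠ 0) {u : ContactSpace n → E} (hu : ContDiff ℝ ∞ u)
    (hsupp : HasCompactSupport u) (a : ContactSpace n) :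
    ∃ I J : List (Fin (2 * n)), I.length = 2 * n + 2 ∧ J.length = 2 * n + 2 ∧
      ‖u a‖ₑ ≤ eLpNorm (XI n I u) 1 volume + eLpNorm (XI n J u) 1 volume := by
  obtain ⟨I, hI, hle⟩ := exists_enorm_le_lmarginal_XI_comp_shear hu hsupp a le_rfl
  have hsmooth := contDiff_XI hu I
  let i : Fin n := ⟨0, Nat.pos_of_ne_zero hn⟩
  refine ⟨⟨n + i, by omega⟩ :: ⟨i, by omega⟩ :: I, ⟨i, by omega⟩ :: ⟨n + i, by omega⟩ :: I,
    by simp [hI], by simp [hI], hle.trans ?_⟩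
  have hmem : Fin.last (2 * n) ∉ ({i : Fin (2 * n + 1) | (i : ℕ) < 2 * n} : Finset _) := by simp
  have hinsert : insert (Fin.last (2 * n)) ({i : Fin (2 * n + 1) | (i : ℕ) < 2 * n} : Finset _) =
      Finset.univ := by
    ext i
    simp [Fin.ext_iff]
    omega
  calc _ ≤ _ := lmarginal_enorm_le_lmarginal_enorm_fderiv (h := XI n I u ∘ shear a)
        ((hsmooth.comp (shear a).contDiff).of_le (by exact_mod_cast le_top))
        ((hasCompactSupport_XI hsupp I).comp_homeomorph (shear a).toHomeomorph) hmem _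
    _ = ∫⁻ q, ‖T0Deriv n (XI n I u) (shear a q)‖ₑ := by
      rw [hinsert, lmarginal_univ]
      exact lintegral_congr fun q =>
        congrArg _ (fderiv_comp_shear_single_last (hsmooth.differentiable (by simp) _))
    _ = ∫⁻ q, ‖T0Deriv n (XI n I u) q‖ₑ :=
      (measurePreserving_shear a).lintegral_comp_emb
        (shear a).toHomeomorph.measurableEmbedding fun q => ‖T0Deriv n (XI n I u) q‖ₑ
    _ ≤ ∫⁻ q, (‖XI n (⟨n + i, by omega⟩ :: ⟨i, by omega⟩ :: I) u q‖ₑ +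
          ‖XI n (⟨i, by omega⟩ :: ⟨n + i, by omega⟩ :: I) u q‖ₑ) := by
      refine lintegral_mono fun q => ?_
      rw [T0Deriv_eq_commutator (hsmooth.contDiffAt.of_le ENat.LEInfty.out) i]
      exact enorm_sub_le
    _ = _ := by
      rw [lintegral_add_left (contDiff_XI hu _).continuous.enorm.measurable,
        eLpNorm_one_eq_lintegral_enorm, eLpNorm_one_eq_lintegral_enorm]

lemma exists_nnnorm_le_of_eLpNorm_XI_le (hn : n ≠ 0) {D : Set (ContactSpace n)}
    (hD : IsBounded D) :
    ∃ C : ℝ≥0, ∀ (B : ℝ≥0) (u : ContactSpace n → ℝ), ContDiff ℝ ∞ u → HasCompactSupport u →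
      tsupport u ⊆ D →
      (∀ I : List (Fin (2 * n)), I.length = 2 * n + 2 → eLpNorm (XI n I u) 2 volume ≤ B) →
      ∀ x, ‖u x‖₊ ≤ C * B := by
  have : IsFiniteMeasure (volume.restrict D) := ⟨by simpa using hD.measure_lt_top⟩
  obtain ⟨C, hC⟩ :=
    exists_eLpNorm_le_mul_eLpNorm (F := ℝ) (volume.restrict D) one_le_two
  refine ⟨2 * C, fun B u hu hsupp hsub hB x => ?_⟩
  have hL1 (I : List (Fin (2 * n))) (hI : I.length = 2 * n + 2) :
      eLpNorm (XI n I u) 1 volume ≤ C * B := by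
    have hsupp_I : Function.support (XI n I u) ⊆ D :=
      (subset_tsupport _).trans ((tsupport_XI_subset u I).trans hsub)
    calc eLpNorm (XI n I u) 1 volume = eLpNorm (XI n I u) 1 (volume.restrict D) :=
          (eLpNorm_restrict_eq_of_support_subset hsupp_I).symm
      _ ≤ C * eLpNorm (XI n I u) 2 (volume.restrict D) :=
          hC _ (contDiff_XI hu I).continuous.aestronglyMeasurable
      _ ≤ C * B := by
          gcongr
          exact (eLpNorm_restrict_le _ _ _ _).trans (hB I hI)
  obtain ⟨I, J, hI, hJ, hle⟩ := exists_enorm_le_eLpNorm_XI_add hn hu hsupp x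
  have : ‖u x‖ₑ ≤ C * B + C * B := hle.trans (add_le_add (hL1 I hI) (hL1 J hJ))
  rw [enorm_eq_nnnorm] at this
  calc ‖u x‖₊ ≤ C * B + C * B := by exact_mod_cast this
    _ = 2 * C * B := by ring

end SobolevBound

section FollandSteinNorm

variable {n s : ℕ} {D : Set (ContactSpace n)} {f g : ContactSpace n → E}

/-- The smooth functions on `D` with finite Folland–Stein norm of order `s`. Since `fsNorm` is
defined by Bochner integrals, it is meaningful only for such functions. -/
structure MemFS (D : Set (ContactSpace n)) (s : ℕ) (f : ContactSpace n → E) : Prop where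
  contDiffOn : ContDiffOn ℝ ∞ f D
  memLp_XI : ∀ I : List (Fin (2 * n)), I.length ≤ s → MemLp (XI n I f) 2 (volume.restrict D)

lemma MemFS.sub (hD : IsOpen D) (hf : MemFS D s f) (hg : MemFS D s g) :
    MemFS D s fun x => f x - g x where
  contDiffOn := hf.contDiffOn.sub hg.contDiffOn
  memLp_XI I hI := by
    refine ((hf.memLp_XI I hI).sub (hg.memLp_XI I hI)).ae_eq ?_
    filter_upwards [ae_restrict_mem hD.measurableSet] with x hx
    exact (XI_sub hD hf.contDiffOn hg.contDiffOn I hx).symm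

lemma exists_contDiffWithinAt_eventuallyEq_XI (hD : IsOpen D) (hf : ContDiffOn ℝ ∞ f (closure D))
    {x : ContactSpace n} (hx : x ∈ closure D) (I : List (Fin (2 * n))) (m : ℕ) :
    ∃ G : ContactSpace n → E, ContDiffWithinAt ℝ m G (closure D) x ∧ XI n I f =ᶠ[𝓝[D] x] G := by
  induction I generalizing m with
  | nil => exact ⟨f, (hf x hx).of_le (by exact_mod_cast le_top), .rfl⟩
  | cons j I ih =>
    obtain ⟨G, hG, heq⟩ := ih (m + 1)
    obtain ⟨V, hV, -, -, G', hderiv, hG'⟩ :=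
      (contDiffWithinAt_succ_iff_hasFDerivWithinAt' (n := m) (by simp)).1 (by exact_mod_cast hG)
    rw [Set.insert_eq_of_mem hx] at hV
    refine ⟨fun y => G' y (Xvec n j y), hG'.clm_apply
      ((contDiff_Xvec j).contDiffAt.contDiffWithinAt.of_le (by exact_mod_cast le_top)), ?_⟩
    filter_upwards [eventually_eventually_nhdsWithin.2 heq, self_mem_nhdsWithin,
      nhdsWithin_mono x subset_closure hV] with y hy hyD hyV
    rw [hD.nhdsWithin_eq hyD] at hy
    have hGy : HasFDerivAt G (G' y) y :=
      (hderiv y hyV).hasFDerivAt (Filter.mem_of_superset (hD.mem_nhds hyD) subset_closure)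
    exact congrArg (· (Xvec n j y)) (Filter.EventuallyEq.fderiv_eq hy |>.trans hGy.fderiv)

lemma isBounded_image_XI (hD : IsOpen D) (hDb : IsBounded D) (hf : ContDiffOn ℝ ∞ f (closure D))
    (I : List (Fin (2 * n))) : IsBounded (XI n I f '' D) := by
  suffices IsBounded (XI n I f '' (closure D ∩ D)) by
    rwa [Set.inter_eq_right.2 subset_closure] at this
  refine hDb.isCompact_closure.induction_on (p := fun S => IsBounded (XI n I f '' (S ∩ D)))
    (by simp) (fun S T hST hT => hT.subset (by gcongr)) (fun S T hS hT => ?_) fun x hx => ?_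
  · rw [Set.union_inter_distrib_right, Set.image_union]
    exact hS.union hT
  · obtain ⟨G, hG, heq⟩ := exists_contDiffWithinAt_eventuallyEq_XI hD hf hx I 0
    have hclose : ∀ᶠ y in 𝓝[D] x, XI n I f y ∈ Metric.closedBall (G x) 1 := by
      filter_upwards [heq, nhdsWithin_mono x subset_closure
        (hG.continuousWithinAt (Metric.closedBall_mem_nhds (G x) one_pos))] with y hy hball
      rw [hy]
      exact hball
    obtain ⟨V, hV, hVD⟩ := mem_nhdsWithin_iff_exists_mem_nhds_inter.1 hclose
    exact ⟨V, mem_nhdsWithin_of_mem_nhds hV,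
      Metric.isBounded_closedBall.subset (Set.image_subset_iff.2 hVD)⟩

lemma memFS_of_contDiffOn_closure (hD : IsOpen D) (hDb : IsBounded D)
    (hf : ContDiffOn ℝ ∞ f (closure D)) (s : ℕ) : MemFS D s f where
  contDiffOn := hf.mono subset_closure
  memLp_XI I _ := by
    have : IsFiniteMeasure (volume.restrict D) := ⟨by simpa using hDb.measure_lt_top⟩
    obtain ⟨C, hC⟩ := isBounded_iff_forall_norm_le.1 (isBounded_image_XI hD hDb hf I)
    refine MemLp.of_bound ((contDiffOn_XI hD (hf.mono subset_closure) I).continuousOn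
      |>.aestronglyMeasurable hD.measurableSet) C ?_
    filter_upwards [ae_restrict_mem hD.measurableSet] with x hx
    exact hC _ (Set.mem_image_of_mem _ hx)

lemma eLpNorm_two_eq_ofReal_sqrt {α F : Type*} [NormedAddCommGroup F] [MeasurableSpace α]
    {μ : Measure α} {u : α → F} (hu : MemLp u 2 μ) :
    eLpNorm u 2 μ = ENNReal.ofReal (√(∫ x, ‖u x‖ ^ 2 ∂μ)) := by
  rw [hu.eLpNorm_eq_integral_rpow_norm two_ne_zero ENNReal.ofNat_ne_top, Real.sqrt_eq_rpow]
  simp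

lemma integral_norm_sq_le_of_eLpNorm_le {α F : Type*} [NormedAddCommGroup F] [MeasurableSpace α]
    {μ : Measure α} {u : α → F} {B : ℝ≥0} (hu : eLpNorm u 2 μ ≤ B) : ∫ x, ‖u x‖ ^ 2 ∂μ ≤ B ^ 2 := by
  have hsq : eLpNorm u 2 μ ^ 2 = ∫⁻ x, ‖u x‖ₑ ^ 2 ∂μ := by
    simpa using eLpNorm_nnreal_pow_eq_lintegral (f := u) (μ := μ) (two_ne_zero (α := ℝ≥0))
  have hle : ‖∫ x, ‖u x‖ ^ 2 ∂μ‖ₑ ≤ (B : ℝ≥0∞) ^ 2 :=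
    calc ‖∫ x, ‖u x‖ ^ 2 ∂μ‖ₑ ≤ ∫⁻ x, ‖‖u x‖ ^ 2‖ₑ ∂μ := enorm_integral_le_lintegral_enorm _
      _ = eLpNorm u 2 μ ^ 2 := by simp only [hsq, enorm_pow, enorm_norm]
      _ ≤ (B : ℝ≥0∞) ^ 2 := by gcongr
  rw [enorm_eq_nnnorm] at hle
  have : ‖∫ x, ‖u x‖ ^ 2 ∂μ‖₊ ≤ B ^ 2 := by exact_mod_cast hle
  exact (Real.le_norm_self _).trans (by exact_mod_cast this)

lemma fsNorm_nonneg (D : Set (ContactSpace n)) (s : ℕ) (f : ContactSpace n → E) :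
    0 ≤ fsNorm n D s f :=
  Real.sqrt_nonneg _

lemma MemFS.eLpNorm_XI_le (hf : MemFS D s f) {I : List (Fin (2 * n))} (hI : I.length ≤ s) :
    eLpNorm (XI n I f) 2 (volume.restrict D) ≤ (fsNorm n D s f).toNNReal := by
  rw [eLpNorm_two_eq_ofReal_sqrt (hf.memLp_XI I hI)]
  refine ENNReal.ofReal_le_ofReal (Real.sqrt_le_sqrt ?_)
  have hnonneg (J : List (Fin (2 * n))) : 0 ≤ ∫ x in D, ‖XI n J f x‖ ^ 2 :=
    integral_nonneg fun x => by positivity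
  calc ∫ x in D, ‖XI n I f x‖ ^ 2
      = ∫ x in D, ‖XI n (List.ofFn I.get) f x‖ ^ 2 := by rw [List.ofFn_get]
    _ ≤ ∑ J : Fin I.length → Fin (2 * n), ∫ x in D, ‖XI n (List.ofFn J) f x‖ ^ 2 :=
      Finset.single_le_sum (f := fun J => ∫ x in D, ‖XI n (List.ofFn J) f x‖ ^ 2)
        (fun J _ => hnonneg _) (Finset.mem_univ I.get)
    _ ≤ fsNormSq n D s f :=
      Finset.single_le_sum (f := fun t => ∑ J : Fin t → Fin (2 * n),
          ∫ x in D, ‖XI n (List.ofFn J) f x‖ ^ 2)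
        (fun t _ => Finset.sum_nonneg fun J _ => hnonneg _) (Finset.mem_range.2 (by omega))

lemma exists_fsNorm_le (n s : ℕ) : ∃ N : ℝ≥0, ∀ (D : Set (ContactSpace n))
    (f : ContactSpace n → E) (B : ℝ≥0),
    (∀ I : List (Fin (2 * n)), I.length ≤ s → eLpNorm (XI n I f) 2 (volume.restrict D) ≤ B) →
    fsNorm n D s f ≤ N * B := by
  refine ⟨NNReal.sqrt (∑ t ∈ Finset.range (s + 1), ∑ _I : Fin t → Fin (2 * n), 1),
    fun D f B hB => ?_⟩
  rw [Real.coe_sqrt, ← Real.sqrt_sq B.coe_nonneg, ← Real.sqrt_mul (NNReal.coe_nonneg _)]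
  refine Real.sqrt_le_sqrt ?_
  push_cast
  simp only [Finset.sum_mul, one_mul]
  refine Finset.sum_le_sum fun t ht => Finset.sum_le_sum fun J _ =>
    integral_norm_sq_le_of_eLpNorm_le (hB _ ?_)
  simpa [Nat.lt_succ_iff] using ht

end FollandSteinNorm

section Cutoff

variable {X : Type*} [NormedAddCommGroup X] [NormedSpace ℝ X] {U : Set X} {χ : X → ℝ}

/-- A smooth cutoff function with values in `[0, 1]` and compact support in `U`. -/
structure IsCutoff (U : Set X) (χ : X → ℝ) : Prop where
  contDiff : ContDiff ℝ ∞ χ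
  hasCompactSupport : HasCompactSupport χ
  tsupport_subset : tsupport χ ⊆ U
  mem_Icc : ∀ x, χ x ∈ Set.Icc (0 : ℝ) 1

lemma IsCutoff.eq_zero (hχ : IsCutoff U χ) {x : X} (hx : x ∉ U) : χ x = 0 :=
  image_eq_zero_of_notMem_tsupport fun h => hx (hχ.tsupport_subset h)

lemma exists_isCutoff_eqOn_one [FiniteDimensional ℝ X] {K : Set X} (hK : IsCompact K)
    (hU : IsOpen U) (hKU : K ⊆ U) : ∃ χ, IsCutoff U χ ∧ ∀ᶠ x in 𝓝ˢ K, χ x = 1 := by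
  obtain ⟨L, hL, hKL, hLU⟩ := exists_compact_between hK hU hKU
  obtain ⟨χ, hone, hzero, hmem⟩ := exists_contMDiffMap_one_nhds_of_subset_interior
    (modelWithCornersSelf ℝ X) (n := (⊤ : ℕ∞)) hK.isClosed hKL
  have hsupp : Function.support χ ⊆ L := fun x hx => by_contra fun h => hx (hzero x h)
  exact ⟨χ, ⟨χ.contMDiff.contDiff, .of_support_subset_isCompact hL hsupp,
    (closure_minimal hsupp hL.isClosed).trans hLU, hmem⟩, hone⟩

lemma contDiff_smul_of_tsupport_subset (hU : IsOpen U) (hχ : ContDiff ℝ ∞ χ)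
    (hsub : tsupport χ ⊆ U) {h : X → E} (hh : ContDiffOn ℝ ∞ h U) :
    ContDiff ℝ ∞ fun x => χ x • h x :=
  contDiff_iff_contDiffAt.2 fun x => by
    by_cases hx : x ∈ tsupport χ
    · exact hχ.contDiffAt.smul (hh.contDiffAt (hU.mem_nhds (hsub hx)))
    · refine contDiffAt_const (c := (0 : E)) |>.congr_of_eventuallyEq ?_
      filter_upwards [notMem_tsupport_iff_eventuallyEq.1 hx] with y hy
      rw [hy, Pi.zero_apply, zero_smul]

lemma exists_forall_of_finite {α : Type*} {S : Set α} (hS : S.Finite) {p : α → ℝ≥0 → Prop}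
    (hmono : ∀ a, Monotone (p a)) (hp : ∀ a ∈ S, ∃ C, p a C) : ∃ C, ∀ a ∈ S, p a C := by
  have hev : ∀ᶠ C in Filter.atTop, ∀ a ∈ S, p a C :=
    (Set.Finite.eventually_all hS).2 fun a ha =>
      let ⟨C, hC⟩ := hp a ha
      Filter.eventually_atTop.2 ⟨C, fun _ hle => hmono a hle hC⟩
  exact hev.exists

variable {n s : ℕ} {D : Set (ContactSpace n)}

lemma exists_eLpNorm_XI_mul_le (hD : IsOpen D) (I : List (Fin (2 * n)))
    {φ : ContactSpace n → ℝ} (hφ : ContDiff ℝ ∞ φ) (hφs : HasCompactSupport φ) :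
    ∃ C : ℝ≥0, ∀ (B : ℝ≥0∞) (g : ContactSpace n → ℝ), ContDiffOn ℝ ∞ g D →
      (∀ J : List (Fin (2 * n)), J.length ≤ I.length →
        eLpNorm (XI n J g) 2 (volume.restrict D) ≤ B) →
      eLpNorm (XI n I fun x => φ x * g x) 2 (volume.restrict D) ≤ C * B := by
  induction I using List.reverseRecOn generalizing φ with
  | nil =>
    obtain ⟨C, hC⟩ := hφs.exists_bound_of_continuous hφ.continuous
    refine ⟨C.toNNReal, fun B g _ hB => (eLpNorm_le_nnreal_smul_eLpNorm_of_ae_le_mul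
      (.of_forall fun x => ?_) 2).trans (mul_le_mul_right (hB [] le_rfl) _)⟩
    rw [XI, XI, nnnorm_mul]
    gcongr
    exact NNReal.coe_le_coe.1 ((hC x).trans (Real.le_coe_toNNReal C))
  | append_singleton I j ih =>
    obtain ⟨C₁, h₁⟩ := ih (contDiff_XI hφ [j]) (hasCompactSupport_XI hφs [j])
    obtain ⟨C₂, h₂⟩ := ih hφ hφs
    refine ⟨C₁ + C₂, fun B g hg hB => ?_⟩
    have hs₁ := (contDiff_XI hφ [j]).contDiffOn.mul hg
    have hs₂ := hφ.contDiffOn.mul (contDiffOn_XI hD hg [j])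
    have hleibniz : XI n (I ++ [j]) (fun x => φ x * g x) =ᵐ[volume.restrict D]
        XI n I (fun x => XI n [j] φ x * g x) + XI n I (fun x => φ x * XI n [j] g x) := by
      filter_upwards [ae_restrict_mem hD.measurableSet] with x hx
      rw [XI_append]
      refine Eq.trans (XI_eventuallyEq ?_ I).eq_of_nhds (XI_add hD hs₁ hs₂ I hx)
      filter_upwards [hD.mem_nhds hx] with y hy
      simp only [XI, hDeriv]
      rw [fderiv_fun_mul (hφ.differentiable (by simp) y)
        ((hg.contDiffAt (hD.mem_nhds hy)).differentiableAt (by simp))]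
      simp [add_comm, mul_comm]
    have haesm {w : ContactSpace n → ℝ} (hw : ContDiffOn ℝ ∞ w D) :
        AEStronglyMeasurable (XI n I w) (volume.restrict D) :=
      (contDiffOn_XI hD hw I).continuousOn.aestronglyMeasurable hD.measurableSet
    rw [eLpNorm_congr_ae hleibniz, ENNReal.coe_add, add_mul]
    refine (eLpNorm_add_le (haesm hs₁) (haesm hs₂) one_le_two).trans (add_le_add
      (h₁ B g hg fun J hJ => hB J ?_) (h₂ B _ (contDiffOn_XI hD hg [j]) fun J hJ => ?_))
    · exact hJ.trans (by simp)
    · rw [← XI_append]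
      exact hB _ (by simpa using hJ)

lemma exists_eLpNorm_XI_smul_apply_le {ι : Type*} [Fintype ι] (hD : IsOpen D)
    {χ : ContactSpace n → ℝ} (hχ : IsCutoff D χ) (s : ℕ) :
    ∃ C : ℝ≥0, ∀ h : ContactSpace n → ι → ℝ, MemFS D s h →
      ∀ I : List (Fin (2 * n)), I.length ≤ s → ∀ i,
        eLpNorm (XI n I fun x => χ x * h x i) 2 volume ≤ C * (fsNorm n D s h).toNNReal := by
  obtain ⟨C, hC⟩ := exists_forall_of_finite (List.finite_length_le (Fin (2 * n)) s)
    (p := fun I C => ∀ (B : ℝ≥0∞) (g : ContactSpace n → ℝ), ContDiffOn ℝ ∞ g D →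
      (∀ J : List (Fin (2 * n)), J.length ≤ I.length →
        eLpNorm (XI n J g) 2 (volume.restrict D) ≤ B) →
      eLpNorm (XI n I fun x => χ x * g x) 2 (volume.restrict D) ≤ C * B)
    (fun I C C' hCC hle B g hg hB => (hle B g hg hB).trans (by gcongr))
    (fun I _ => exists_eLpNorm_XI_mul_le hD I hχ.contDiff hχ.hasCompactSupport)
  refine ⟨C, fun h hh I hI i => ?_⟩
  have hsupp : Function.support (XI n I fun x => χ x * h x i) ⊆ D :=
    (subset_tsupport _).trans ((tsupport_XI_subset _ I).trans
      (tsupport_mul_subset_left.trans hχ.tsupport_subset))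
  rw [← eLpNorm_restrict_eq_of_support_subset hsupp]
  refine hC I hI _ (fun x => h x i) (contDiffOn_pi.1 hh.contDiffOn i) fun J hJ => ?_
  refine (eLpNorm_mono_ae ?_).trans (hh.eLpNorm_XI_le (hJ.trans hI))
  filter_upwards [ae_restrict_mem hD.measurableSet] with x hx
  rw [← XI_pi_apply hD hh.contDiffOn J i hx]
  exact norm_le_pi_norm _ i

end Cutoff

section CutoffBounds

variable {n s : ℕ} {ι : Type*} [Fintype ι] {D : Set (ContactSpace n)} {χ : ContactSpace n → ℝ}

lemma exists_interpBound_smul (hs : s ≠ 0) (hD : IsOpen D) (hχ : IsCutoff D χ) :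
    ∃ C : ℝ≥0, ∀ (h : ContactSpace n → ι → ℝ) (A β : ℝ≥0), MemFS D s h → 0 < β →
      (∀ x, ‖χ x • h x‖₊ ≤ A) → (fsNorm n D s h).toNNReal ≤ A * β ^ s →
      InterpBound s (C * A) β fun x => χ x • h x := by
  obtain ⟨C, hC⟩ := exists_eLpNorm_XI_smul_apply_le (ι := ι) hD hχ s
  refine ⟨(2 * s) ^ (s * s) * (C + 1), fun h A β hh hβ hsup hnorm => ?_⟩
  have hsmooth := contDiff_smul_of_tsupport_subset hD hχ.contDiff hχ.tsupport_subset hh.contDiffOn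
  have hA : A ≤ (C + 1) * A := le_mul_of_one_le_left' (by simp)
  have hB : 1 ≤ ((2 * s) ^ (s * s) : ℝ≥0) :=
    one_le_pow₀ (by exact_mod_cast (by omega : 1 ≤ 2 * s))
  refine ⟨hsmooth, fun x => ?_, fun I i hI => ?_⟩
  · rw [mul_assoc]
    exact (hsup x).trans (hA.trans (le_mul_of_one_le_left' hB))
  · refine (eLpNorm_XI_interpExp_le (A := (C + 1) * A) hs hβ (contDiff_pi.1 hsmooth i)
      hχ.hasCompactSupport.mul_right
      (fun x => (nnnorm_le_pi_nnnorm _ i).trans ((hsup x).trans hA))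
      (fun J hJ => (hC h hh J hJ.le i).trans ?_) I hI).trans_eq (by push_cast; ring)
    have hCA : C * (fsNorm n D s h).toNNReal ≤ (C + 1) * A * β ^ s := by
      rw [mul_assoc]
      exact mul_le_mul' le_self_add hnorm
    exact_mod_cast hCA

lemma exists_nnnorm_smul_le_fsNorm (hn : n ≠ 0) (hs : 2 * n + 2 ≤ s) (hD : IsOpen D)
    (hDb : IsBounded D) (hχ : IsCutoff D χ) :
    ∃ C : ℝ≥0, ∀ h : ContactSpace n → ι → ℝ, MemFS D s h →
      ∀ x, ‖χ x • h x‖₊ ≤ C * (fsNorm n D s h).toNNReal := by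
  obtain ⟨C, hC⟩ := exists_nnnorm_le_of_eLpNorm_XI_le hn hDb
  obtain ⟨C', hC'⟩ := exists_eLpNorm_XI_smul_apply_le (ι := ι) hD hχ s
  refine ⟨C * C', fun h hh x => pi_nnnorm_le_iff.2 fun i => ?_⟩
  have hsmooth := contDiff_smul_of_tsupport_subset hD hχ.contDiff hχ.tsupport_subset hh.contDiffOn
  rw [mul_assoc]
  exact hC _ _ (contDiff_pi.1 hsmooth i) hχ.hasCompactSupport.mul_right
    (tsupport_mul_subset_left.trans hχ.tsupport_subset)
    (fun I hI => by exact_mod_cast hC' h hh I (hI.le.trans hs) i) x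

lemma IsCutoff.exists_nnnorm_smul_le (hD : IsOpen D) (hχ : IsCutoff D χ)
    {f : ContactSpace n → E} (hf : ContDiffOn ℝ ∞ f D) (c : ℝ≥0) :
    ∃ M : ℝ≥0, ∀ g : ContactSpace n → E, (∀ x ∈ D, ‖g x - f x‖₊ ≤ c) →
      ∀ x, ‖χ x • g x‖₊ ≤ M := by
  have hsmooth := contDiff_smul_of_tsupport_subset hD hχ.contDiff hχ.tsupport_subset hf
  obtain ⟨M, hM⟩ := hχ.hasCompactSupport.smul_right (f' := f) |>.exists_bound_of_continuous
    hsmooth.continuous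
  refine ⟨M.toNNReal + c, fun g hg x => ?_⟩
  have hfx : ‖χ x • f x‖₊ ≤ M.toNNReal :=
    NNReal.coe_le_coe.1 ((hM x).trans (Real.le_coe_toNNReal M))
  by_cases hx : x ∈ D
  · have hχx : ‖χ x‖₊ ≤ 1 := NNReal.coe_le_coe.1 <| by
      simpa [abs_of_nonneg (hχ.mem_Icc x).1] using (hχ.mem_Icc x).2
    calc ‖χ x • g x‖₊ = ‖χ x • f x + χ x • (g x - f x)‖₊ := by rw [← smul_add, add_sub_cancel]
      _ ≤ ‖χ x • f x‖₊ + ‖χ x‖₊ * ‖g x - f x‖₊ :=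
        (nnnorm_add_le _ _).trans_eq (by rw [nnnorm_smul (χ x) (g x - f x)])
      _ ≤ M.toNNReal + 1 * c := by gcongr; exact hg x hx
      _ = M.toNNReal + c := by rw [one_mul]
  · simp [hχ.eq_zero hx]

lemma exists_interpPair_smul (hn : n ≠ 0) (hs : 2 * n + 2 ≤ s) (hD : IsOpen D)
    (hDb : IsBounded D) (hχ : IsCutoff D χ) {f : ContactSpace n → ι → ℝ} (hf : MemFS D s f)
    (c : ℝ≥0) :
    ∃ A : ℝ≥0, ∀ (g : ContactSpace n → ι → ℝ) (β : ℝ≥0), MemFS D s g →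
      (∀ x ∈ D, ‖g x - f x‖₊ ≤ c) → 1 ≤ β → (fsNorm n D s f).toNNReal ≤ β ^ s →
      (fsNorm n D s g).toNNReal ≤ β ^ s →
      InterpPair s A (fsNorm n D s fun x => f x - g x).toNNReal β
        (fun x => χ x • f x) (fun x => χ x • g x) := by
  obtain ⟨C, hC⟩ := exists_interpBound_smul (ι := ι) (s := s) (by omega) hD hχ
  obtain ⟨S, hS⟩ := exists_nnnorm_smul_le_fsNorm (ι := ι) hn hs hD hDb hχ
  obtain ⟨M, hM⟩ := hχ.exists_nnnorm_smul_le hD hf.contDiffOn c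
  refine ⟨C * (M + S + 1), fun g β hg hgc hβ hfβ hgβ => ?_⟩
  have hβ₀ : 0 < β := one_pos.trans_le hβ
  have hone : 1 ≤ M + S + 1 := le_add_self
  have hMA : M ≤ M + S + 1 := by rw [add_assoc]; exact le_self_add
  have hSA : S ≤ M + S + 1 := le_add_self.trans le_self_add
  refine ⟨hC f _ β hf hβ₀ (fun x => (hM f (by simp) x).trans hMA)
    (hfβ.trans (le_mul_of_one_le_left' hone)), hC g _ β hg hβ₀ (fun x => (hM g hgc x).trans hMA)
    (hgβ.trans (le_mul_of_one_le_left' hone)), ?_⟩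
  have hsub : ((fun x => χ x • f x) - fun x => χ x • g x) = fun x => χ x • (f x - g x) :=
    funext fun x => (smul_sub _ _ _).symm
  rw [hsub, mul_assoc]
  refine hC _ _ β (hf.sub hD hg) hβ₀ (fun x => (hS _ (hf.sub hD hg) x).trans (by gcongr)) ?_
  exact (le_mul_of_one_le_left' hone).trans (le_mul_of_one_le_right' (one_le_pow₀ hβ))

end CutoffBounds

section Superposition

variable {n s : ℕ} {ι κ : Type*} [Fintype ι] [Fintype κ] {D : Set (ContactSpace n)}
  {χ : ContactSpace n → ℝ}

lemma IsCutoff.contDiff_smul_uncurry {X Y : Type*} [NormedAddCommGroup X] [NormedSpace ℝ X]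
    [NormedAddCommGroup Y] [NormedSpace ℝ Y] {U : Set X} {χ : X → ℝ} (hU : IsOpen U)
    (hχ : IsCutoff U χ) {F : X → Y → E}
    (hF : ContDiffOn ℝ ∞ (fun p : X × Y => F p.1 p.2) (U ×ˢ Set.univ)) :
    ContDiff ℝ ∞ fun p : X × Y => χ p.1 • F p.1 p.2 := by
  refine contDiff_smul_of_tsupport_subset (χ := fun p : X × Y => χ p.1) (hU.prod isOpen_univ)
    (hχ.contDiff.comp contDiff_fst) (fun p hp => ⟨hχ.tsupport_subset ?_, Set.mem_univ _⟩) hF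
  exact tsupport_comp_subset_preimage χ continuous_fst hp

lemma exists_eLpNorm_XI_comp_sub_le (hs : s ≠ 0) (hD : IsBounded D) (hDm : MeasurableSet D)
    {Φ : ContactSpace n × (ι → ℝ) → ℝ} (hΦ : ContDiff ℝ ∞ Φ) (A : ℝ≥0) :
    ∃ C : ℝ≥0, ∀ I ∈ {I : List (Fin (2 * n)) | I.length ≤ s}, ∀ β W : ℝ≥0, 1 ≤ β →
      ∀ u v : ContactSpace n → ι → ℝ, InterpPair s A W β u v →
      eLpNorm (XI n I fun x => Φ (x, u x) - Φ (x, v x)) 2 (volume.restrict D) ≤ C * W * β ^ s := by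
  refine exists_forall_of_finite (List.finite_length_le (Fin (2 * n)) s)
    (p := fun I C => ∀ β W : ℝ≥0, 1 ≤ β → ∀ u v : ContactSpace n → ι → ℝ, InterpPair s A W β u v →
      eLpNorm (XI n I fun x => Φ (x, u x) - Φ (x, v x)) 2 (volume.restrict D) ≤ C * W * β ^ s)
    (fun I C C' hCC h β W hβ u v huv => (h β W hβ u v huv).trans (by gcongr)) fun I hI => ?_
  obtain ⟨Q, hQ, hXI⟩ := (IsPolyDiffOp.comp Φ hΦ).exists_XI_eq I
  obtain ⟨C, hC⟩ := (hQ.mono (by simpa using hI)).exists_eLpNorm_sub_le hs le_rfl hD hDm A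
  refine ⟨C, fun β W hβ u v h => ?_⟩
  have hΦu {w : ContactSpace n → ι → ℝ} (hw : ContDiff ℝ ∞ w) :
      ContDiffOn ℝ ∞ (fun x => Φ (x, w x)) Set.univ :=
    (hΦ.comp (contDiff_id.prodMk hw)).contDiffOn
  have hsub : (XI n I fun x => Φ (x, u x) - Φ (x, v x)) = Q u - Q v := funext fun x => by
    rw [XI_sub isOpen_univ (hΦu h.left.contDiff) (hΦu h.right.contDiff) I (Set.mem_univ x),
      ← hXI u h.left.contDiff, ← hXI v h.right.contDiff, Pi.sub_apply]
  simpa only [hsub, interpExp_self hs] using hC β W hβ u v h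

lemma eLpNorm_pi_le_sum_eLpNorm {α : Type*} [MeasurableSpace α] {μ : Measure α} {u : α → κ → ℝ}
    (hu : AEStronglyMeasurable u μ) {p : ℝ≥0∞} (hp : 1 ≤ p) :
    eLpNorm u p μ ≤ ∑ i, eLpNorm (fun x => u x i) p μ := by
  have hui (i : κ) : AEStronglyMeasurable (fun x => ‖u x i‖) μ :=
    ((continuous_apply i).comp_aestronglyMeasurable hu).norm
  calc eLpNorm u p μ ≤ eLpNorm (∑ i, fun x => ‖u x i‖) p μ := eLpNorm_mono_real fun x => by
        rw [Finset.sum_apply]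
        exact (pi_norm_le_iff_of_nonneg (by positivity)).2 fun i =>
          Finset.single_le_sum (f := fun i => ‖u x i‖) (fun _ _ => norm_nonneg _)
            (Finset.mem_univ i)
    _ ≤ ∑ i, eLpNorm (fun x => ‖u x i‖) p μ := eLpNorm_sum_le (fun i _ => hui i) hp
    _ = ∑ i, eLpNorm (fun x => u x i) p μ := Finset.sum_congr rfl fun i _ => eLpNorm_norm _

end Superposition

section TameEstimate

variable {n s : ℕ} {ι κ : Type*} [Fintype ι] [Fintype κ] {D D' : Set (ContactSpace n)}

lemma exists_fsNorm_comp_sub_le (hs : s ≠ 0) (hD : IsBounded D) (hDm : MeasurableSet D)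
    {Φ : ContactSpace n × (ι → ℝ) → κ → ℝ} (hΦ : ContDiff ℝ ∞ Φ) (A : ℝ≥0) :
    ∃ C : ℝ≥0, ∀ β W : ℝ≥0, 1 ≤ β → ∀ u v : ContactSpace n → ι → ℝ, InterpPair s A W β u v →
      fsNorm n D s (fun x => Φ (x, u x) - Φ (x, v x)) ≤ C * W * β ^ s := by
  obtain ⟨N, hN⟩ := exists_fsNorm_le (E := κ → ℝ) n s
  choose C hC using fun i => exists_eLpNorm_XI_comp_sub_le hs hD hDm (contDiff_pi.1 hΦ i) A
  refine ⟨N * ∑ i, C i, fun β W hβ u v h => ?_⟩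
  have hsmooth : ContDiff ℝ ∞ fun x => Φ (x, u x) - Φ (x, v x) :=
    (hΦ.comp (contDiff_id.prodMk h.left.contDiff)).sub
      (hΦ.comp (contDiff_id.prodMk h.right.contDiff))
  have hXI (I : List (Fin (2 * n))) (hI : I.length ≤ s) :
      eLpNorm (XI n I fun x => Φ (x, u x) - Φ (x, v x)) 2 (volume.restrict D) ≤
        ((∑ i, C i) * W * β ^ s : ℝ≥0) := by
    refine (eLpNorm_pi_le_sum_eLpNorm
      (contDiff_XI hsmooth I).continuous.aestronglyMeasurable one_le_two).trans ?_
    push_cast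
    rw [Finset.sum_mul, Finset.sum_mul]
    refine Finset.sum_le_sum fun i _ => ?_
    have hcomp : (fun x => XI n I (fun y => Φ (y, u y) - Φ (y, v y)) x i) =
        XI n I fun y => Φ (y, u y) i - Φ (y, v y) i := funext fun x =>
      XI_pi_apply isOpen_univ hsmooth.contDiffOn I i (Set.mem_univ x)
    exact hcomp ▸ hC i I hI β W hβ u v h
  exact (hN D _ _ hXI).trans_eq (by push_cast; ring)

lemma fsNorm_congr (hD : MeasurableSet D) {f g : ContactSpace n → E}
    (h : ∀ x ∈ D, f =ᶠ[𝓝 x] g) : fsNorm n D s f = fsNorm n D s g := by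
  unfold fsNorm fsNormSq
  refine congrArg Real.sqrt (Finset.sum_congr rfl fun t _ => Finset.sum_congr rfl fun I _ => ?_)
  exact setIntegral_congr_fun hD fun x hx => by
    simp only [(XI_eventuallyEq (h x hx) (List.ofFn I)).eq_of_nhds]

lemma exists_one_le_pow_eq (hs : s ≠ 0) {t : ℝ≥0} (ht : 1 ≤ t) : ∃ β, 1 ≤ β ∧ β ^ s = t :=
  ⟨t ^ (s⁻¹ : ℝ), NNReal.one_le_rpow ht (by positivity), NNReal.rpow_inv_natCast_pow t hs⟩

lemma mul_one_add_add_le_sum (hs : s ≠ 0) {a b C : ℝ} (ha : 0 ≤ a) (hb : 0 ≤ b) (hC : 0 ≤ C) :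
    C * (1 + a + b) ≤ ∑ i : Fin (s + 1), ∑ j : Fin (s + 1), C * a ^ (i : ℕ) * b ^ (j : ℕ) := by
  have hgeom {t : ℝ} (ht : 0 ≤ t) : 1 + t ≤ ∑ i : Fin (s + 1), t ^ (i : ℕ) := by
    rw [Fin.sum_univ_eq_sum_range (t ^ ·)]
    calc 1 + t = ∑ i ∈ Finset.range 2, t ^ i := by simp [Finset.sum_range_succ]
      _ ≤ ∑ i ∈ Finset.range (s + 1), t ^ i := Finset.sum_le_sum_of_subset_of_nonneg
        (Finset.range_mono (by omega)) fun _ _ _ => by positivity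
  calc C * (1 + a + b) ≤ C * ((1 + a) * (1 + b)) := by gcongr; nlinarith [mul_nonneg ha hb]
    _ ≤ C * ((∑ i : Fin (s + 1), a ^ (i : ℕ)) * ∑ j : Fin (s + 1), b ^ (j : ℕ)) := by
      gcongr
      exacts [hgeom ha, hgeom hb]
    _ = ∑ i : Fin (s + 1), ∑ j : Fin (s + 1), C * a ^ (i : ℕ) * b ^ (j : ℕ) := by
      rw [Finset.sum_mul_sum]
      simp only [Finset.mul_sum, mul_assoc]

theorem statement15_general (hn : n ≠ 0) (hs : 2 * n + 2 ≤ s) (hD : IsOpen D)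
    (hDb : IsBounded D) (hD' : MeasurableSet D') (hsub : closure D' ⊆ D)
    {F : ContactSpace n → (ι → ℝ) → κ → ℝ}
    (hF : ContDiffOn ℝ ∞ (fun p : ContactSpace n × (ι → ℝ) => F p.1 p.2) (D ×ˢ Set.univ))
    {f : ContactSpace n → ι → ℝ} (hf : MemFS D s f) (c : ℝ) :
    ∃ C : ℝ, 0 ≤ C ∧ ∀ g : ContactSpace n → ι → ℝ, MemFS D s g → (∀ x ∈ D, ‖g x - f x‖ ≤ c) →
      fsNorm n D' s (fun x => F x (f x) - F x (g x)) ≤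
        fsNorm n D s (fun x => f x - g x) * (C * (1 + fsNorm n D s f + fsNorm n D s g)) := by
  have hs₀ : s ≠ 0 := by omega
  have hD'b : IsBounded D' := hDb.subset (subset_closure.trans hsub)
  obtain ⟨χ, hχ, hone⟩ := exists_isCutoff_eqOn_one hD'b.isCompact_closure hD hsub
  obtain ⟨A, hA⟩ := exists_interpPair_smul hn hs hD hDb hχ hf c.toNNReal
  obtain ⟨C, hC⟩ := exists_fsNorm_comp_sub_le hs₀ hD'b hD' (hχ.contDiff_smul_uncurry hD hF) A
  refine ⟨C, C.2, fun g hg hgc => ?_⟩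
  obtain ⟨β, hβ, hβs⟩ := exists_one_le_pow_eq hs₀
    (t := 1 + (fsNorm n D s f).toNNReal + (fsNorm n D s g).toNNReal) (by simp [add_assoc])
  have hpair := hA g β hg (fun x hx => NNReal.coe_le_coe.1
    ((hgc x hx).trans (Real.le_coe_toNNReal c))) hβ
    (hβs ▸ le_add_self.trans le_self_add) (hβs ▸ le_add_self)
  have hlocal : ∀ x ∈ D', (fun x => F x (f x) - F x (g x)) =ᶠ[𝓝 x]
      fun x => χ x • F x (χ x • f x) - χ x • F x (χ x • g x) := fun x hx => by
    filter_upwards [mem_nhdsSet_iff_forall.1 hone x (subset_closure hx)] with y hy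
    simp only [show χ y = 1 from hy, one_smul]
  rw [fsNorm_congr hD' hlocal]
  refine (hC β _ hβ _ _ hpair).trans_eq ?_
  rw [← NNReal.coe_pow, hβs]
  simp only [NNReal.coe_add, NNReal.coe_one, Real.coe_toNNReal _ (fsNorm_nonneg _ _ _)]
  ring

end TameEstimate

/-- nonlinear composition estimate (Palais' Axiom B5): there is a
polynomial `Q` of bidegree `≤ s` with nonnegative coefficients such that
`‖F(·,f(·)) − F(·,g(·))‖_{D′,s} ≤ ‖f−g‖_{D,s} Q(‖f‖_{D,s}, ‖g‖_{D,s})` whenever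
`sup_D |g − f| ≤ c`. -/
theorem statement15 (n m₁ m₂ s : ℕ) (hn : 1 ≤ n) (hs : 2*n+4 ≤ s)
    (D D' : Set (Fin (2*n+1) → ℝ)) (hD : IsOpen D) (hDb : IsBounded D)
    (hD' : IsOpen D') (hD'b : IsBounded D') (hsub : closure D' ⊆ D)
    (F : (Fin (2*n+1) → ℝ) → (Fin m₁ → ℝ) → (Fin m₂ → ℝ))
    (hF : ContDiffOn ℝ (⊤:ℕ∞)
      (fun p : (Fin (2*n+1) → ℝ) × (Fin m₁ → ℝ) => F p.1 p.2)
      ((closure D) ×ˢ (Set.univ : Set (Fin m₁ → ℝ))))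
    (f : (Fin (2*n+1) → ℝ) → (Fin m₁ → ℝ)) (hf : ContDiffOn ℝ (⊤:ℕ∞) f (closure D))
    (c : ℝ) (hc : 0 < c) :
    ∃ Q : Fin (s+1) → Fin (s+1) → ℝ, (∀ i j, 0 ≤ Q i j) ∧
      ∀ g : (Fin (2*n+1) → ℝ) → (Fin m₁ → ℝ), ContDiffOn ℝ (⊤:ℕ∞) g (closure D) →
        (∀ x ∈ D, ‖g x - f x‖ ≤ c) →
        fsNorm n D' s (fun x => F x (f x) - F x (g x)) ≤
          fsNorm n D s (fun x => f x - g x) *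
            ∑ i : Fin (s+1), ∑ j : Fin (s+1),
              Q i j * (fsNorm n D s f)^(i:ℕ) * (fsNorm n D s g)^(j:ℕ) := by
  obtain ⟨C, hC, hle⟩ := statement15_general (by omega) (by omega) hD hDb hD'.measurableSet hsub
    (hF.mono (Set.prod_mono_left subset_closure)) (memFS_of_contDiffOn_closure hD hDb hf s) c
  exact ⟨fun _ _ => C, fun _ _ => hC, fun g hg hgc =>
    (hle g (memFS_of_contDiffOn_closure hD hDb hg s) hgc).trans (mul_le_mul_of_nonneg_left
      (mul_one_add_add_le_sum (by omega) (fsNorm_nonneg D s f) (fsNorm_nonneg D s g) hC)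
      (fsNorm_nonneg D s _))⟩

end
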